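/- arXiv:2603.03395 — 12 statements merged into one kernel-verified Lean document; each statement's English description precedes it below -/
import Mathlib

section
/- For every real number x in the interval [0,1] there exists a digit sequence a : ℕ → {0,1,...,s-1} such that x = β_{a(0)} + ∑_{k=1}^∞ β_{a(k)} · ∏_{j=0}^{k-1} q_{a(j)}; that is, every number in [0,1] admits a Q_s-representation. -/
open Filter

/-- The `Q_s`-value of a digit sequence `a : ℕ → ℕ` (with digits `< s`) with respect to
the weights `q`:  `val(a) = β_{a 0} + ∑_{k≥1} β_{a k} · ∏_{j<k} q_{a j}`,
where `β_j = ∑_{i<j} q i`. -/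
noncomputable def qsVal (q : ℕ → ℝ) (a : ℕ → ℕ) : ℝ :=
  ∑' k : ℕ, (∑ i ∈ Finset.range (a k), q i) * ∏ j ∈ Finset.range k, q (a j)

/-- Every real number in `[0,1]` admits a `Q_s`-representation. -/
theorem exists_Qs_representation (s : ℕ) (hs : 2 ≤ s) (q : ℕ → ℝ)
    (hq : ∀ i < s, 0 < q i) (hsum : ∑ i ∈ Finset.range s, q i = 1)
    (x : ℝ) (hx : x ∈ Set.Icc (0 : ℝ) 1) :
    ∃ a : ℕ → ℕ, (∀ n, a n < s) ∧ x = qsVal q a := by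
  have hstep : ∀ y : Set.Icc (0:ℝ) 1, ∃ p : ℕ × Set.Icc (0:ℝ) 1, p.1 < s ∧
      (y : ℝ) = ∑ i ∈ Finset.range p.1, q i + q p.1 * (p.2 : ℝ) := by
    rintro ⟨y, hy0, hy1⟩
    have hex : ∃ d, y ≤ ∑ i ∈ Finset.range (d + 1), q i := by
      refine ⟨s - 1, ?_⟩
      rw [Nat.sub_add_cancel (by omega), hsum]
      exact hy1
    classical
    have h1 := Nat.find_spec hex
    have h2 : ∀ m < Nat.find hex, ¬ (y ≤ ∑ i ∈ Finset.range (m + 1), q i) :=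
      fun m hm => Nat.find_min hex hm
    have h3 : Nat.find hex ≤ s - 1 := by
      apply Nat.find_min'
      rw [Nat.sub_add_cancel (by omega), hsum]
      exact hy1
    generalize Nat.find hex = d at h1 h2 h3
    have hd : d < s := by omega
    have hb : ∑ i ∈ Finset.range d, q i ≤ y := by
      rcases d with _ | m
      · simpa using hy0
      · exact (not_le.mp (h2 m (Nat.lt_succ_self m))).le
    rw [Finset.sum_range_succ] at h1
    have hqd := hq d hd
    refine ⟨(d, ⟨(y - ∑ i ∈ Finset.range d, q i) / q d, ?_, ?_⟩), hd, ?_⟩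
    · exact div_nonneg (by linarith) hqd.le
    · rw [div_le_one hqd]; linarith
    · simp only
      rw [mul_div_cancel₀ _ hqd.ne']
      ring
  choose f hf1 hf2 using hstep
  let Y : ℕ → Set.Icc (0:ℝ) 1 := fun n => (fun y => (f y).2)^[n] ⟨x, hx⟩
  have hY : ∀ n, Y (n + 1) = (f (Y n)).2 := fun n => Function.iterate_succ_apply' _ _ _
  let a : ℕ → ℕ := fun n => (f (Y n)).1
  have ha : ∀ n, a n < s := fun n => hf1 _
  have hrec : ∀ n, (Y n : ℝ) = ∑ i ∈ Finset.range (a n), q i + q (a n) * (Y (n + 1) : ℝ) := by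
    intro n
    rw [hY]
    exact hf2 (Y n)
  have hpart : ∀ n, ∑ k ∈ Finset.range n,
      (∑ i ∈ Finset.range (a k), q i) * ∏ j ∈ Finset.range k, q (a j)
      = x - (∏ j ∈ Finset.range n, q (a j)) * (Y n : ℝ) := by
    intro n
    induction n with
    | zero => simp [Y]
    | succ n ih =>
      rw [Finset.sum_range_succ, ih, Finset.prod_range_succ, hrec n]
      ring
  have hlt : ∀ i < s, q i < 1 := by
    intro i hi
    obtain ⟨j, hj, hij⟩ : ∃ j < s, j ≠ i := by
      by_cases h : i = 0
      · exact ⟨1, by omega, by omega⟩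
      · exact ⟨0, by omega, by omega⟩
    rw [← hsum]
    exact Finset.single_lt_sum hij (Finset.mem_range.2 hi) (Finset.mem_range.2 hj) (hq j hj)
      (fun k hk _ => (hq k (Finset.mem_range.1 hk)).le)
  obtain ⟨m, hm, hmax⟩ := Finset.exists_max_image (Finset.range s) q ⟨0, Finset.mem_range.2 (by omega)⟩
  rw [Finset.mem_range] at hm
  have hP0 : ∀ n, 0 ≤ ∏ j ∈ Finset.range n, q (a j) :=
    fun n => Finset.prod_nonneg fun j _ => (hq _ (ha j)).le
  have hPle : ∀ n, ∏ j ∈ Finset.range n, q (a j) ≤ q m ^ n := by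
    intro n
    calc _ ≤ ∏ j ∈ Finset.range n, q m :=
          Finset.prod_le_prod (fun j _ => (hq _ (ha j)).le)
            (fun j _ => hmax _ (Finset.mem_range.2 (ha j)))
      _ = _ := by simp
  have hlim : Tendsto (fun n => (∏ j ∈ Finset.range n, q (a j)) * (Y n : ℝ)) atTop (nhds 0) := by
    refine squeeze_zero (fun n => mul_nonneg (hP0 n) (Y n).2.1) (fun n => ?_)
      (tendsto_pow_atTop_nhds_zero_of_lt_one (hq m hm).le (hlt m hm))
    exact (mul_le_of_le_one_right (hP0 n) (Y n).2.2).trans (hPle n)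
  refine ⟨a, ha, ?_⟩
  have hS : HasSum (fun k => (∑ i ∈ Finset.range (a k), q i) * ∏ j ∈ Finset.range k, q (a j)) x := by
    rw [hasSum_iff_tendsto_nat_of_nonneg]
    · simp only [hpart]
      simpa using hlim.const_sub x
    · intro k
      exact mul_nonneg (Finset.sum_nonneg fun i hi =>
        (hq i ((Finset.mem_range.1 hi).trans (ha k))).le) (hP0 k)
  exact hS.tsum_eq.symm
end

section
/- Let c, d ∈ {0,...,s-1} with c ≠ d, and let a be the digit sequence formed by concatenating, for k = 1, 2, 3, ..., a block of 2^{k-1} copies of d followed by a block of 2^{k-1} copies of c. Then the asymptotic mean of a does not exist, i.e. the limit lim_{n→∞} (1/n) ∑_{i=0}^{n-1} a(i) does not exist. -/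
open Filter

lemma aux_lim (S : ℕ → ℝ) (L : ℝ) (h : Tendsto (fun n => S n / n) atTop (nhds L))
    (n : ℕ → ℕ) (m p q : ℝ) (hn : Tendsto n atTop atTop)
    (hn1 : ∀ k, (n k : ℝ) = m * 2 ^ k - 2) (hS : ∀ k, S (n k) = p * 2 ^ k - q) :
    L * m = p := by
  have hp : Tendsto (fun k : ℕ => ((1 / 2 : ℝ)) ^ k) atTop (nhds 0) :=
    tendsto_pow_atTop_nhds_zero_of_lt_one (by norm_num) (by norm_num)
  have h1 : Tendsto (fun k => S (n k) / (n k) * (m - 2 * (1 / 2 : ℝ) ^ k)) atTop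
      (nhds (L * (m - 2 * 0))) :=
    (h.comp hn).mul (tendsto_const_nhds.sub (hp.const_mul 2))
  have h2 : Tendsto (fun k : ℕ => p - q * (1 / 2 : ℝ) ^ k) atTop (nhds (p - q * 0)) :=
    tendsto_const_nhds.sub (hp.const_mul q)
  have h3 : (fun k => S (n k) / (n k) * (m - 2 * (1 / 2 : ℝ) ^ k)) =ᶠ[atTop]
      (fun k : ℕ => p - q * (1 / 2 : ℝ) ^ k) := by
    filter_upwards [hn.eventually_gt_atTop 0] with k hk
    have hk' : (n k : ℝ) ≠ 0 := by positivity
    have h2k : (2 : ℝ) ^ k ≠ 0 := by positivity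
    have e1 : m - 2 * (1 / 2 : ℝ) ^ k = n k / 2 ^ k := by
      rw [hn1, one_div, inv_pow]; field_simp
    have e2 : p - q * (1 / 2 : ℝ) ^ k = S (n k) / 2 ^ k := by
      rw [hS, one_div, inv_pow]; field_simp
    rw [e1, e2]; field_simp
  have := tendsto_nhds_unique (h1.congr' h3) h2
  simpa using this

/-- Let `c ≠ d` be digits in `{0,…,s-1}` and let `a` be the digit sequence obtained by
concatenating, for `k = 1, 2, 3, …`, a block of `2^(k-1)` copies of `d` followed by a
block of `2^(k-1)` copies of `c`  (so the `k`-th double block, of length `2^k`, starts at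
position `2^k - 2`; below blocks are indexed by `k - 1`).  Then the asymptotic mean of `a`
does not exist. -/
theorem asymptoticMean_not_exists_of_doubling_blocks (s : ℕ) (hs : 2 ≤ s)
    (c d : ℕ) (hc : c < s) (hd : d < s) (hcd : c ≠ d)
    (a : ℕ → ℕ)
    (hblocks : ∀ k : ℕ, ∀ j < 2 ^ (k + 1),
      a (2 ^ (k + 1) - 2 + j) = if j < 2 ^ k then d else c) :
    ¬ ∃ L : ℝ, Filter.Tendsto (fun n => (∑ i ∈ Finset.range n, (a i : ℝ)) / n)
        Filter.atTop (nhds L) := by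
  rintro ⟨L, hL⟩
  have key : ∀ k : ℕ, (∑ i ∈ Finset.range (2 ^ (k + 1) - 2 + 2 ^ k), (a i : ℝ))
      = (∑ i ∈ Finset.range (2 ^ (k + 1) - 2), (a i : ℝ)) + 2 ^ k * d := by
    intro k
    rw [Finset.sum_range_add]
    congr 1
    rw [Finset.sum_congr rfl (g := fun _ => (d : ℝ))]
    · simp
    · intro j hj
      rw [Finset.mem_range] at hj
      rw [hblocks k j (by rw [pow_succ]; omega), if_pos hj]
  have hpos : ∀ k : ℕ, 1 ≤ 2 ^ k := fun k => Nat.one_le_two_pow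
  have key2 : ∀ k : ℕ, (∑ i ∈ Finset.range (2 ^ (k + 1 + 1) - 2), (a i : ℝ))
      = (∑ i ∈ Finset.range (2 ^ (k + 1) - 2 + 2 ^ k), (a i : ℝ)) + 2 ^ k * c := by
    intro k
    have e : 2 ^ (k + 1 + 1) - 2 = (2 ^ (k + 1) - 2 + 2 ^ k) + 2 ^ k := by
      have := hpos k
      rw [pow_succ, pow_succ]; omega
    rw [e, Finset.sum_range_add]
    congr 1
    rw [Finset.sum_congr rfl (g := fun _ => (c : ℝ))]
    · simp
    · intro j hj
      rw [Finset.mem_range] at hj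
      rw [add_assoc, hblocks k (2 ^ k + j) (by rw [pow_succ]; omega), if_neg (by omega)]
  have hA : ∀ k : ℕ, (∑ i ∈ Finset.range (2 ^ (k + 1) - 2), (a i : ℝ))
      = ((c : ℝ) + d) * 2 ^ k - (c + d) := by
    intro k
    induction k with
    | zero => simp
    | succ k ih => rw [key2, key, ih, pow_succ]; ring
  have hcast : ∀ k : ℕ, ((2 ^ (k + 1) - 2 : ℕ) : ℝ) = 2 * 2 ^ k - 2 := by
    intro k
    have := hpos k
    rw [Nat.cast_sub (by rw [pow_succ]; omega)]
    push_cast; ring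
  have hge : ∀ k : ℕ, k ≤ 2 ^ (k + 1) - 2 := by
    intro k
    have : k < 2 ^ k := Nat.lt_two_pow_self
    rw [pow_succ]; omega
  have r1 := aux_lim (fun n => ∑ i ∈ Finset.range n, (a i : ℝ)) L hL
    (fun k => 2 ^ (k + 1) - 2) 2 (c + d) (c + d)
    (tendsto_atTop_mono hge tendsto_id) hcast hA
  have r2 := aux_lim (fun n => ∑ i ∈ Finset.range n, (a i : ℝ)) L hL
    (fun k => 2 ^ (k + 1) - 2 + 2 ^ k) 3 (c + 2 * d) (c + d)
    (tendsto_atTop_mono (fun k => (hge k).trans (Nat.le_add_right _ _)) tendsto_id)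
    (fun k => by rw [Nat.cast_add, hcast]; push_cast; ring)
    (fun k => by simp only [key, hA]; ring)
  apply hcd
  have : (c : ℝ) = d := by linarith
  exact_mod_cast this
end

section
/- The set S has the cardinality of the continuum. -/
open Filter

/-- The set `S` of real numbers that are `Q_s`-values of digit sequences whose
asymptotic mean of digits does not exist. -/
noncomputable def Sset (s : ℕ) (q : ℕ → ℝ) : Set ℝ :=
  {x | ∃ a : ℕ → ℕ, (∀ n, a n < s) ∧ x = qsVal q a ∧
    ¬ ∃ L : ℝ, Filter.Tendsto (fun n => (∑ i ∈ Finset.range n, (a i : ℝ)) / n)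
      Filter.atTop (nhds L)}


section helpers

variable {s : ℕ} {q : ℕ → ℝ}

lemma beta_nonneg (hq : ∀ i < s, 0 < q i) {j : ℕ} (hj : j < s) :
    0 ≤ ∑ i ∈ Finset.range j, q i :=
  Finset.sum_nonneg fun i hi => (hq i ((Finset.mem_range.1 hi).trans hj)).le

lemma beta_add_le (hq : ∀ i < s, 0 < q i) (hsum : ∑ i ∈ Finset.range s, q i = 1)
    {j : ℕ} (hj : j < s) : (∑ i ∈ Finset.range j, q i) + q j ≤ 1 := by
  rw [← Finset.sum_range_succ, ← hsum]
  apply Finset.sum_le_sum_of_subset_of_nonneg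
  · exact Finset.range_subset_range.2 hj
  · intro i hi _
    exact (hq i (Finset.mem_range.1 hi)).le

lemma term_nonneg (hq : ∀ i < s, 0 < q i) {a : ℕ → ℕ} (ha : ∀ n, a n < s) (k : ℕ) :
    0 ≤ (∑ i ∈ Finset.range (a k), q i) * ∏ j ∈ Finset.range k, q (a j) :=
  mul_nonneg (beta_nonneg hq (ha k)) (Finset.prod_nonneg fun j _ => (hq _ (ha j)).le)

lemma partial_le (hq : ∀ i < s, 0 < q i) (hsum : ∑ i ∈ Finset.range s, q i = 1)
    {a : ℕ → ℕ} (ha : ∀ n, a n < s) (n : ℕ) :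
    (∑ k ∈ Finset.range n, (∑ i ∈ Finset.range (a k), q i) * ∏ j ∈ Finset.range k, q (a j))
      + ∏ j ∈ Finset.range n, q (a j) ≤ 1 := by
  induction n with
  | zero => simp
  | succ n ih =>
    rw [Finset.sum_range_succ, Finset.prod_range_succ]
    have h1 := beta_add_le hq hsum (ha n)
    have h2 : 0 ≤ ∏ j ∈ Finset.range n, q (a j) :=
      Finset.prod_nonneg fun j _ => (hq _ (ha j)).le
    nlinarith [mul_le_mul_of_nonneg_right h1 h2]

lemma partial_le' (hq : ∀ i < s, 0 < q i) (hsum : ∑ i ∈ Finset.range s, q i = 1)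
    {a : ℕ → ℕ} (ha : ∀ n, a n < s) (n : ℕ) :
    (∑ k ∈ Finset.range n, (∑ i ∈ Finset.range (a k), q i) * ∏ j ∈ Finset.range k, q (a j))
      ≤ 1 := by
  have h2 : 0 ≤ ∏ j ∈ Finset.range n, q (a j) :=
    Finset.prod_nonneg fun j _ => (hq _ (ha j)).le
  linarith [partial_le hq hsum ha n]

lemma val_summable (hq : ∀ i < s, 0 < q i) (hsum : ∑ i ∈ Finset.range s, q i = 1)
    {a : ℕ → ℕ} (ha : ∀ n, a n < s) :
    Summable fun k => (∑ i ∈ Finset.range (a k), q i) * ∏ j ∈ Finset.range k, q (a j) :=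
  summable_of_sum_range_le (term_nonneg hq ha) (partial_le' hq hsum ha)

lemma val_le_one (hq : ∀ i < s, 0 < q i) (hsum : ∑ i ∈ Finset.range s, q i = 1)
    {a : ℕ → ℕ} (ha : ∀ n, a n < s) : qsVal q a ≤ 1 :=
  Real.tsum_le_of_sum_range_le (term_nonneg hq ha) (partial_le' hq hsum ha)

lemma val_nonneg (hq : ∀ i < s, 0 < q i) {a : ℕ → ℕ} (ha : ∀ n, a n < s) : 0 ≤ qsVal q a :=
  tsum_nonneg (term_nonneg hq ha)

lemma val_rec (hq : ∀ i < s, 0 < q i) (hsum : ∑ i ∈ Finset.range s, q i = 1)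
    {a : ℕ → ℕ} (ha : ∀ n, a n < s) :
    qsVal q a = (∑ i ∈ Finset.range (a 0), q i) + q (a 0) * qsVal q (fun n => a (n + 1)) := by
  unfold qsVal
  rw [(val_summable hq hsum ha).tsum_eq_zero_add, ← tsum_mul_left]
  congr 1
  · simp
  · apply tsum_congr
    intro k
    rw [Finset.prod_range_succ']
    ring

lemma q0_lt (hs : 2 ≤ s) (hq : ∀ i < s, 0 < q i) (hsum : ∑ i ∈ Finset.range s, q i = 1) :
    q 0 < 1 := by
  have := beta_add_le hq hsum (j := 1) (by omega)
  have h1 := hq 1 (by omega)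
  simp at this
  linarith

lemma val_lt_one (hs : 2 ≤ s) (hq : ∀ i < s, 0 < q i) (hsum : ∑ i ∈ Finset.range s, q i = 1)
    (N : ℕ) : ∀ a : ℕ → ℕ, (∀ n, a n < s) → a N = 0 → qsVal q a < 1 := by
  induction N with
  | zero =>
    intro a ha h0
    rw [val_rec hq hsum ha, h0]
    have h1 := val_le_one hq hsum (a := fun n => a (n + 1)) (fun n => ha _)
    have h2 := q0_lt hs hq hsum
    have h3 := hq 0 (by omega)
    simp
    nlinarith
  | succ N ih =>
    intro a ha h0
    rw [val_rec hq hsum ha]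
    have h1 := ih (fun n => a (n + 1)) (fun n => ha _) h0
    have h2 := beta_add_le hq hsum (ha 0)
    have h3 := hq _ (ha 0)
    nlinarith

lemma val_lt (hs : 2 ≤ s) (hq : ∀ i < s, 0 < q i) (hsum : ∑ i ∈ Finset.range s, q i = 1)
    {a b : ℕ → ℕ} (ha : ∀ n, a n < s) (hb : ∀ n, b n < s) (hz : ∀ N, ∃ n ≥ N, a n = 0)
    (a0 : a 0 = 0) (b0 : b 0 = 1) : qsVal q a < qsVal q b := by
  rw [val_rec hq hsum ha, val_rec hq hsum hb, a0, b0]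
  obtain ⟨n, hn, hn0⟩ := hz 1
  have h1 := val_lt_one hs hq hsum (n - 1) (fun n => a (n + 1)) (fun n => ha _)
    (by simpa [Nat.sub_add_cancel hn] using hn0)
  have h2 := val_nonneg hq (a := fun n => b (n + 1)) (fun n => hb _)
  have h3 := hq 0 (by omega)
  have h4 := hq 1 (by omega)
  simp
  nlinarith [mul_nonneg h4.le h2]

lemma val_inj (hs : 2 ≤ s) (hq : ∀ i < s, 0 < q i) (hsum : ∑ i ∈ Finset.range s, q i = 1)
    (N : ℕ) : ∀ a b : ℕ → ℕ, (∀ n, a n < 2) → (∀ n, b n < 2) → (∀ N, ∃ n ≥ N, a n = 0) →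
      (∀ N, ∃ n ≥ N, b n = 0) → qsVal q a = qsVal q b → a N = b N := by
  have key : ∀ a b : ℕ → ℕ, (∀ n, a n < 2) → (∀ n, b n < 2) → (∀ N, ∃ n ≥ N, a n = 0) →
      (∀ N, ∃ n ≥ N, b n = 0) → qsVal q a = qsVal q b → a 0 = b 0 := by
    intro a b ha hb za zb h
    by_contra hne
    have ha' : ∀ n, a n < s := fun n => (ha n).trans_le hs
    have hb' : ∀ n, b n < s := fun n => (hb n).trans_le hs
    have h1 := ha 0
    have h2 := hb 0
    rcases (by omega : (a 0 = 0 ∧ b 0 = 1) ∨ (b 0 = 0 ∧ a 0 = 1)) with ⟨h3, h4⟩ | ⟨h3, h4⟩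
    · exact (val_lt hs hq hsum ha' hb' za h3 h4).ne h
    · exact (val_lt hs hq hsum hb' ha' zb h3 h4).ne h.symm
  have shift : ∀ a : ℕ → ℕ, (∀ N, ∃ n ≥ N, a n = 0) → (∀ N, ∃ n ≥ N, a (n + 1) = 0) := by
    intro a h N
    obtain ⟨n, hn, h0⟩ := h (N + 1)
    exact ⟨n - 1, by omega, by rwa [Nat.sub_add_cancel (by omega)]⟩
  induction N with
  | zero => exact key
  | succ N ih =>
    intro a b ha hb za zb h
    have h0 := key a b ha hb za zb h
    have ha' : ∀ n, a n < s := fun n => (ha n).trans_le hs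
    have hb' : ∀ n, b n < s := fun n => (hb n).trans_le hs
    rw [val_rec hq hsum ha', val_rec hq hsum hb', h0] at h
    exact ih (fun n => a (n + 1)) (fun n => b (n + 1)) (fun n => ha _) (fun n => hb _)
      (shift a za) (shift b zb) (mul_left_cancel₀ (hq _ (hb' 0)).ne' (add_left_cancel h))

end helpers

/-- Digit sequence coding a binary sequence, with long blocks of zeros and ones. -/
def codeSeq (x : ℕ → Bool) (n : ℕ) : ℕ :=
  if n = 4 ^ Nat.log 4 n then (if x (Nat.log 4 n) then 1 else 0) else Nat.log 4 n % 2

lemma codeSeq_lt (x : ℕ → Bool) (n : ℕ) : codeSeq x n < 2 := by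
  unfold codeSeq
  split_ifs <;> omega

lemma codeSeq_pow (x : ℕ → Bool) (k : ℕ) : codeSeq x (4 ^ k) = if x k then 1 else 0 := by
  unfold codeSeq
  rw [Nat.log_pow (by norm_num)]
  simp

lemma codeSeq_block (x : ℕ → Bool) {k n : ℕ} (h1 : 4 ^ k < n) (h2 : n < 4 ^ (k + 1)) :
    codeSeq x n = k % 2 := by
  unfold codeSeq
  have : Nat.log 4 n = k := Nat.log_eq_of_pow_le_of_lt_pow h1.le h2
  rw [this, if_neg h1.ne']

lemma codeSeq_zeros (x : ℕ → Bool) (N : ℕ) : ∃ n ≥ N, codeSeq x n = 0 := by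
  have h : 2 * N < 4 ^ (2 * N) := Nat.lt_pow_self (by norm_num)
  refine ⟨4 ^ (2 * N) + 1, by omega, ?_⟩
  rw [codeSeq_block x (k := 2 * N) (by omega) (by rw [pow_succ]; omega)]
  omega

lemma codeSeq_inj {x y : ℕ → Bool} (h : ∀ n, codeSeq x n = codeSeq y n) : x = y := by
  funext k
  have := h (4 ^ k)
  rw [codeSeq_pow, codeSeq_pow] at this
  cases hx : x k <;> cases hy : y k <;> simp_all

lemma codeSeq_sum (x : ℕ → Bool) (k : ℕ) :
    ∑ i ∈ Finset.range (4 ^ (k + 1)), codeSeq x i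
      = (∑ i ∈ Finset.range (4 ^ k + 1), codeSeq x i) + (3 * 4 ^ k - 1) * (k % 2) := by
  have hp : 0 < 4 ^ k := by positivity
  have hle : 4 ^ k + 1 ≤ 4 ^ (k + 1) := by rw [pow_succ]; omega
  rw [← Finset.sum_range_add_sum_Ico _ hle]
  congr 1
  rw [Finset.sum_congr rfl (g := fun _ => k % 2)]
  · rw [Finset.sum_const, Nat.card_Ico, smul_eq_mul]
    congr 1
    rw [pow_succ]; omega
  · intro i hi
    rw [Finset.mem_Ico] at hi
    exact codeSeq_block x (by omega) hi.2

lemma codeSeq_not_tendsto (x : ℕ → Bool) :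
    ¬ ∃ L : ℝ, Filter.Tendsto (fun n : ℕ => (∑ i ∈ Finset.range n, (codeSeq x i : ℝ)) / n)
      Filter.atTop (nhds L) := by
  rintro ⟨L, hL⟩
  have tp : ∀ c : ℕ, Tendsto (fun m : ℕ => 4 ^ (2 * m + c + 1)) atTop atTop := by
    intro c
    refine tendsto_atTop_mono (fun m => ?_) tendsto_id
    have : 2 * m + c + 1 < 4 ^ (2 * m + c + 1) := Nat.lt_pow_self (by norm_num)
    simp only [id]
    omega
  have hu : L ≤ 1 / 2 := by
    refine le_of_tendsto' (hL.comp (tp 0)) fun m => ?_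
    have hs := codeSeq_sum x (2 * m)
    have hb : ∑ i ∈ Finset.range (4 ^ (2 * m) + 1), codeSeq x i ≤ 4 ^ (2 * m) + 1 := by
      calc _ ≤ ∑ i ∈ Finset.range (4 ^ (2 * m) + 1), 1 :=
            Finset.sum_le_sum fun i _ => Nat.le_of_lt_succ (codeSeq_lt x i)
        _ = _ := by simp
    have hp : 0 < 4 ^ (2 * m) := by positivity
    have h : 2 * ∑ i ∈ Finset.range (4 ^ (2 * m + 1)), codeSeq x i ≤ 4 ^ (2 * m + 1) := by
      rw [hs, Nat.mul_mod_right, pow_succ]; omega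
    simp only [Function.comp, add_zero]
    rw [div_le_iff₀ (by positivity)]
    have h' : (2 : ℝ) * ∑ i ∈ Finset.range (4 ^ (2 * m + 1)), (codeSeq x i : ℝ)
      ≤ ((4 ^ (2 * m + 1) : ℕ) : ℝ) := by exact_mod_cast h
    linarith
  have hl : 11 / 16 ≤ L := by
    refine ge_of_tendsto' (hL.comp (tp 1)) fun m => ?_
    have hs := codeSeq_sum x (2 * m + 1)
    have hp : 0 < 4 ^ (2 * m) := by positivity
    have h : 11 * 4 ^ (2 * m + 1 + 1) ≤
        16 * ∑ i ∈ Finset.range (4 ^ (2 * m + 1 + 1)), codeSeq x i := by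
      rw [hs, show (2 * m + 1) % 2 = 1 by omega, pow_succ, pow_succ]; omega
    simp only [Function.comp]
    rw [le_div_iff₀ (by positivity)]
    have h' : (11 : ℝ) * ((4 ^ (2 * m + 1 + 1) : ℕ) : ℝ) ≤
        16 * ∑ i ∈ Finset.range (4 ^ (2 * m + 1 + 1)), (codeSeq x i : ℝ) := by exact_mod_cast h
    linarith
  linarith

/-- The set `S` has the cardinality of the continuum. -/
theorem Sset_cardinality_continuum (s : ℕ) (hs : 2 ≤ s) (q : ℕ → ℝ)
    (hq : ∀ i < s, 0 < q i) (hsum : ∑ i ∈ Finset.range s, q i = 1) :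
    Cardinal.mk (Sset s q) = Cardinal.continuum := by
  apply le_antisymm
  · rw [← Cardinal.mk_real]
    exact Cardinal.mk_set_le _
  · have hc : Cardinal.mk (ℕ → Bool) = Cardinal.continuum := by simp
    rw [← hc]
    refine Cardinal.mk_le_of_injective (f := fun x => (⟨qsVal q (codeSeq x), codeSeq x,
      fun n => (codeSeq_lt x n).trans_le hs, rfl, codeSeq_not_tendsto x⟩ : Sset s q)) ?_
    intro x y h
    exact codeSeq_inj fun n => val_inj hs hq hsum n _ _ (codeSeq_lt x) (codeSeq_lt y)
      (codeSeq_zeros x) (codeSeq_zeros y) (congrArg Subtype.val h)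
end

section
/- The set S is dense in the interval [0,1]. -/
open Filter

lemma aux_r (s : ℕ) (hs : 2 ≤ s) (q : ℕ → ℝ)
    (hq : ∀ i < s, 0 < q i) (hsum : ∑ i ∈ Finset.range s, q i = 1) :
    ∃ r : ℝ, 0 < r ∧ r < 1 ∧ ∀ i < s, q i ≤ r := by
  obtain ⟨m, hm, hmax⟩ := Finset.exists_max_image (Finset.range s) q ⟨0, by simp; omega⟩
  have hm' := Finset.mem_range.1 hm
  refine ⟨q m, hq m hm', ?_, fun i hi => hmax i (Finset.mem_range.2 hi)⟩
  rw [← hsum]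
  have : ∃ j < s, j ≠ m := by
    rcases Nat.eq_zero_or_pos m with h | h
    · exact ⟨1, by omega, by omega⟩
    · exact ⟨0, by omega, by omega⟩
  obtain ⟨j, hj, hjm⟩ := this
  exact Finset.single_lt_sum hjm hm (Finset.mem_range.2 hj) (hq j hj)
    (fun k hk _ => (hq k (Finset.mem_range.1 hk)).le)

lemma aux_d (q : ℕ → ℝ) (x : ℝ) (hx : 0 ≤ x) (m : ℕ) (hm : 1 ≤ m)
    (h : x ≤ ∑ i ∈ Finset.range m, q i) :
    ∃ d < m, ∑ i ∈ Finset.range d, q i ≤ x ∧ x ≤ ∑ i ∈ Finset.range d, q i + q d := by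
  induction m, hm using Nat.le_induction with
  | base => exact ⟨0, by simp, by simpa using hx, by simpa using h⟩
  | succ m hm ih =>
    rcases le_total x (∑ i ∈ Finset.range m, q i) with h1 | h1
    · obtain ⟨d, hd, h2⟩ := ih h1
      exact ⟨d, by omega, h2⟩
    · exact ⟨m, by omega, h1, by rwa [Finset.sum_range_succ] at h⟩

lemma aux_summable (s : ℕ) (hs : 2 ≤ s) (q : ℕ → ℝ)
    (hq : ∀ i < s, 0 < q i) (hsum : ∑ i ∈ Finset.range s, q i = 1) (a : ℕ → ℕ)
    (ha : ∀ n, a n < s) :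
    Summable fun k : ℕ => (∑ i ∈ Finset.range (a k), q i) * ∏ j ∈ Finset.range k, q (a j) := by
  obtain ⟨r, hr0, hr1, hr⟩ := aux_r s hs q hq hsum
  have h0 : ∀ k, 0 ≤ ∑ i ∈ Finset.range (a k), q i := fun k =>
    Finset.sum_nonneg fun i hi => (hq i ((Finset.mem_range.1 hi).trans (ha k))).le
  have h2 : ∀ k, 0 ≤ ∏ j ∈ Finset.range k, q (a j) := fun k =>
    Finset.prod_nonneg fun i _ => (hq _ (ha i)).le
  refine Summable.of_nonneg_of_le (fun k => mul_nonneg (h0 k) (h2 k)) (fun k => ?_)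
    (summable_geometric_of_lt_one hr0.le hr1)
  have h1 : ∑ i ∈ Finset.range (a k), q i ≤ 1 := by
    rw [← hsum]
    exact Finset.sum_le_sum_of_subset_of_nonneg
      (fun i hi => Finset.mem_range.2 ((Finset.mem_range.1 hi).trans (ha k)))
      (fun i hi _ => (hq i (Finset.mem_range.1 hi)).le)
  have h3 : ∏ j ∈ Finset.range k, q (a j) ≤ r ^ k := by
    have := Finset.prod_le_prod (s := Finset.range k) (f := fun j => q (a j)) (g := fun _ => r)
      (fun i _ => (hq _ (ha i)).le) (fun i _ => hr _ (ha i))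
    simpa using this
  calc _ ≤ 1 * r ^ k := mul_le_mul h1 h3 (h2 k) zero_le_one
    _ = r ^ k := one_mul _

lemma aux_cons (s : ℕ) (hs : 2 ≤ s) (q : ℕ → ℝ)
    (hq : ∀ i < s, 0 < q i) (hsum : ∑ i ∈ Finset.range s, q i = 1) (y : ℝ)
    (hy : y ∈ Sset s q) (d : ℕ) (hd : d < s) :
    ∑ i ∈ Finset.range d, q i + q d * y ∈ Sset s q := by
  obtain ⟨a, ha, rfl, hL⟩ := hy
  let b : ℕ → ℕ := fun n => Nat.casesOn n d a
  have hb0 : b 0 = d := rfl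
  have hbs : ∀ n, b (n + 1) = a n := fun n => rfl
  have hb : ∀ n, b n < s := by
    intro n
    cases n with
    | zero => exact hd
    | succ n => exact ha n
  refine ⟨b, hb, ?_, ?_⟩
  · unfold qsVal
    rw [(aux_summable s hs q hq hsum b hb).tsum_eq_zero_add, ← tsum_mul_left]
    simp only [Finset.prod_range_succ', hbs, hb0, Finset.prod_range_zero, mul_one]
    congr 1
    refine tsum_congr fun k => ?_
    ring
  · rintro ⟨L, h⟩
    refine hL ⟨L, ?_⟩
    have h1 := h.comp (tendsto_add_atTop_nat 1)
    have h2 : Tendsto (fun n : ℕ => (1 : ℝ) / n) atTop (nhds 0) :=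
      tendsto_one_div_atTop_nhds_zero_nat
    have h3 := (h1.mul (h2.const_add 1)).sub (h2.const_mul (d : ℝ))
    simp only [add_zero, mul_one, mul_zero, sub_zero] at h3
    refine h3.congr' ?_
    filter_upwards [eventually_gt_atTop 0] with n hn
    have : (0 : ℝ) < n := by exact_mod_cast hn
    simp only [Function.comp, Finset.sum_range_succ', hbs, hb0]
    push_cast
    field_simp
    ring

lemma aux_nonempty (s : ℕ) (hs : 2 ≤ s) (q : ℕ → ℝ) : ∃ y, y ∈ Sset s q := by
  refine ⟨_, fun i => Nat.log 2 i % 2, fun n => ?_, rfl, ?_⟩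
  · exact (Nat.mod_lt _ (by norm_num)).trans_le hs
  rintro ⟨L, h⟩
  have hp : Tendsto (fun k : ℕ => 2 ^ k) atTop (atTop : Filter ℕ) :=
    tendsto_pow_atTop_atTop_of_one_lt (by norm_num)
  have h1 := h.comp hp
  have h2 := h1.comp (tendsto_add_atTop_nat 1)
  have h3 := (h2.const_mul 2).sub h1
  have h4 : Tendsto (fun k : ℕ => ((k % 2 : ℕ) : ℝ)) atTop (nhds (2 * L - L)) := by
    refine h3.congr fun k => ?_
    have e : ∑ i ∈ Finset.range (2 ^ (k + 1)), ((Nat.log 2 i % 2 : ℕ) : ℝ)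
        = ∑ i ∈ Finset.range (2 ^ k), ((Nat.log 2 i % 2 : ℕ) : ℝ) + 2 ^ k * ((k % 2 : ℕ) : ℝ) := by
      rw [pow_succ, mul_two, Finset.sum_range_add]
      congr 1
      rw [Finset.sum_congr rfl (g := fun _ => ((k % 2 : ℕ) : ℝ))]
      · simp
      · intro i hi
        have hi := Finset.mem_range.1 hi
        rw [Nat.log_eq_of_pow_le_of_lt_pow (m := k) (by omega) (by rw [pow_succ]; omega)]
    simp only [Function.comp]
    rw [e]
    push_cast
    field_simp
    ring
  have e1 : Tendsto (fun n : ℕ => 2 * n) atTop atTop :=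
    tendsto_id.const_mul_atTop' (by norm_num)
  have e2 : Tendsto (fun n : ℕ => 2 * n + 1) atTop atTop := (tendsto_add_atTop_nat 1).comp e1
  have f1 := h4.comp e1
  have f2 := h4.comp e2
  have g1 : Tendsto (fun _ : ℕ => (0 : ℝ)) atTop (nhds (2 * L - L)) :=
    f1.congr fun n => by simp
  have g2 : Tendsto (fun _ : ℕ => (1 : ℝ)) atTop (nhds (2 * L - L)) :=
    f2.congr fun n => by simp [Nat.add_mod]
  have k1 := tendsto_nhds_unique g1 tendsto_const_nhds
  have k2 := tendsto_nhds_unique g2 tendsto_const_nhds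
  linarith

/-- The set `S` is dense in the interval `[0,1]`. -/
theorem Sset_dense_in_Icc (s : ℕ) (hs : 2 ≤ s) (q : ℕ → ℝ)
    (hq : ∀ i < s, 0 < q i) (hsum : ∑ i ∈ Finset.range s, q i = 1) :
    Set.Icc (0 : ℝ) 1 ⊆ closure (Sset s q) := by
  obtain ⟨r, hr0, hr1, hr⟩ := aux_r s hs q hq hsum
  obtain ⟨y0, hy0⟩ := aux_nonempty s hs q
  have key : ∀ n : ℕ, ∀ x : ℝ, 0 ≤ x → x ≤ 1 →
      ∃ y ∈ Sset s q, |x - y| ≤ r ^ n * (1 + |y0|) := by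
    intro n
    induction n with
    | zero =>
      intro x h0 h1
      refine ⟨y0, hy0, ?_⟩
      have := abs_sub x y0
      rw [abs_of_nonneg h0] at this
      linarith
    | succ n ih =>
      intro x h0 h1
      obtain ⟨d, hd, hl, hu⟩ := aux_d q x h0 s (by omega) (by rw [hsum]; exact h1)
      have hqd := hq d hd
      obtain ⟨y, hy, hxy⟩ := ih ((x - ∑ i ∈ Finset.range d, q i) / q d)
        (div_nonneg (by linarith) hqd.le) ((div_le_one hqd).2 (by linarith))
      refine ⟨_, aux_cons s hs q hq hsum y hy d hd, ?_⟩
      have e : x - (∑ i ∈ Finset.range d, q i + q d * y)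
          = q d * ((x - ∑ i ∈ Finset.range d, q i) / q d - y) := by
        field_simp
        ring
      rw [e, abs_mul, abs_of_pos hqd, pow_succ', mul_assoc]
      exact mul_le_mul (hr d hd) hxy (abs_nonneg _) hr0.le
  rintro x ⟨h0, h1⟩
  rw [Metric.mem_closure_iff]
  intro ε hε
  have ht := (tendsto_pow_atTop_nhds_zero_of_lt_one hr0.le hr1).mul_const (1 + |y0|)
  rw [zero_mul] at ht
  obtain ⟨n, hn⟩ := (ht.eventually (gt_mem_nhds hε)).exists
  obtain ⟨y, hy, hxy⟩ := key n x h0 h1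
  exact ⟨y, hy, by rw [Real.dist_eq]; exact hxy.trans_lt hn⟩
end

section
/- The set S is everywhere discontinuous: for any two points x, y ∈ S with x < y there exists a point z with x < z < y and z ∉ S. -/
open Filter

namespace QsAux

noncomputable def term (q : ℕ → ℝ) (a : ℕ → ℕ) (k : ℕ) : ℝ :=
  (∑ i ∈ Finset.range (a k), q i) * ∏ j ∈ Finset.range k, q (a j)

noncomputable def part (q : ℕ → ℝ) (n : ℕ) (a : ℕ → ℕ) : ℝ :=
  ∑ k ∈ Finset.range n, term q a k

lemma part_succ (q : ℕ → ℝ) (n : ℕ) (a : ℕ → ℕ) :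
    part q (n+1) a = (∑ i ∈ Finset.range (a 0), q i) + q (a 0) * part q n (fun k => a (k+1)) := by
  unfold part
  rw [Finset.sum_range_succ', Finset.mul_sum, add_comm]
  congr 1
  · simp [term]
  · apply Finset.sum_congr rfl
    intro k _
    simp only [term, Finset.prod_range_succ' _ k]
    ring

section
variable {s : ℕ} {q : ℕ → ℝ} (hq : ∀ i < s, 0 < q i) (hsum : ∑ i ∈ Finset.range s, q i = 1)
include hq

lemma beta_mono {m n : ℕ} (h : m ≤ n) (hn : n ≤ s) :
    ∑ i ∈ Finset.range m, q i ≤ ∑ i ∈ Finset.range n, q i := by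
  apply Finset.sum_le_sum_of_subset_of_nonneg
  · intro i; simp only [Finset.mem_range]; omega
  · intro i hi _
    exact (hq i (by simp only [Finset.mem_range] at hi; omega)).le

lemma beta_nonneg {n : ℕ} (hn : n ≤ s) : 0 ≤ ∑ i ∈ Finset.range n, q i := by
  simpa using beta_mono hq (Nat.zero_le n) hn

lemma beta_pos {n : ℕ} (h0 : n ≠ 0) (hn : n ≤ s) : 0 < ∑ i ∈ Finset.range n, q i := by
  apply Finset.sum_pos
  · intro i hi
    exact hq i (by simp only [Finset.mem_range] at hi; omega)
  · simpa using h0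

lemma term_nonneg {a : ℕ → ℕ} (ha : ∀ n, a n < s) (k : ℕ) : 0 ≤ term q a k :=
  mul_nonneg (beta_nonneg hq (ha k).le) (Finset.prod_nonneg fun j _ => (hq _ (ha j)).le)

lemma term_pos {a : ℕ → ℕ} (ha : ∀ n, a n < s) {k : ℕ} (hk : a k ≠ 0) : 0 < term q a k :=
  mul_pos (beta_pos hq hk (ha k).le) (Finset.prod_pos fun j _ => hq _ (ha j))

lemma part_nonneg {a : ℕ → ℕ} (ha : ∀ n, a n < s) (n : ℕ) : 0 ≤ part q n a :=
  Finset.sum_nonneg fun k _ => term_nonneg hq ha k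

include hsum

lemma beta_step {m n : ℕ} (h : m < n) (hn : n ≤ s) :
    (∑ i ∈ Finset.range m, q i) + q m ≤ ∑ i ∈ Finset.range n, q i := by
  rw [← Finset.sum_range_succ]
  exact beta_mono hq h hn

lemma part_le_one (n : ℕ) : ∀ {a : ℕ → ℕ}, (∀ n, a n < s) → part q n a ≤ 1 := by
  induction n with
  | zero => intro a _; simp [part]
  | succ n ih =>
    intro a ha
    rw [part_succ]
    have h1 := ih (a := fun k => a (k+1)) (fun k => ha _)
    have h2 := beta_step hq hsum (ha 0) le_rfl
    have h3 := hq _ (ha 0)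
    rw [hsum] at h2
    nlinarith

lemma summ {a : ℕ → ℕ} (ha : ∀ n, a n < s) : Summable (term q a) :=
  summable_of_sum_range_le (c := 1) (term_nonneg hq ha) fun n => part_le_one hq hsum n ha

lemma tends {a : ℕ → ℕ} (ha : ∀ n, a n < s) :
    Tendsto (fun n => part q n a) atTop (nhds (qsVal q a)) :=
  (summ hq hsum ha).hasSum.tendsto_sum_nat

lemma val_le_one {a : ℕ → ℕ} (ha : ∀ n, a n < s) : qsVal q a ≤ 1 :=
  le_of_tendsto' (tends hq hsum ha) fun n => part_le_one hq hsum n ha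

lemma part_lt {a : ℕ → ℕ} (ha : ∀ n, a n < s) {n k : ℕ} (hk : n ≤ k) (hne : a k ≠ 0) :
    part q n a < qsVal q a := by
  have h1 : part q (k+1) a ≤ qsVal q a :=
    (summ hq hsum ha).sum_le_tsum _ fun i _ => term_nonneg hq ha i
  have h2 : part q n a ≤ part q k a := by
    apply Finset.sum_le_sum_of_subset_of_nonneg
    · intro i; simp only [Finset.mem_range]; omega
    · intro i _ _; exact term_nonneg hq ha i
  have h3 : part q (k+1) a = part q k a + term q a k := Finset.sum_range_succ _ _
  have := term_pos hq ha hne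
  linarith

lemma val_succ {a : ℕ → ℕ} (ha : ∀ n, a n < s) :
    qsVal q a = (∑ i ∈ Finset.range (a 0), q i) + q (a 0) * qsVal q (fun k => a (k+1)) := by
  have h1 := (tends hq hsum ha).comp (tendsto_add_atTop_nat 1)
  have h2 := ((tends hq hsum (a := fun k => a (k+1)) (fun k => ha _)).const_mul (q (a 0))).const_add
    (∑ i ∈ Finset.range (a 0), q i)
  refine tendsto_nhds_unique h1 (h2.congr fun n => ?_)
  simp [part_succ]

lemma val_lt_one (k : ℕ) : ∀ {a : ℕ → ℕ}, (∀ n, a n < s) → a k ≠ s - 1 → qsVal q a < 1 := by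
  induction k with
  | zero =>
    intro a ha h
    rw [val_succ hq hsum ha]
    have h1 := val_le_one hq hsum (a := fun k => a (k+1)) (fun k => ha _)
    have h0 := ha 0
    have h2 := beta_step hq hsum (m := a 0) (n := s-1) (by omega) (by omega)
    have h4 := beta_step hq hsum (m := s-1) (n := s) (by omega) le_rfl
    have h5 := hq (s-1) (by omega)
    have h3 := hq _ (ha 0)
    rw [hsum] at h4
    nlinarith
  | succ k ih =>
    intro a ha h
    rw [val_succ hq hsum ha]
    have h1 := ih (a := fun k => a (k+1)) (fun k => ha _) h
    have h2 := beta_step hq hsum (ha 0) le_rfl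
    have h3 := hq _ (ha 0)
    rw [hsum] at h2
    nlinarith

lemma val_ne (n : ℕ) : ∀ {b c : ℕ → ℕ}, (∀ n, b n < s) → (∀ n, c n < s) →
    (∀ d N, ∃ k, N ≤ k ∧ c k ≠ d) → qsVal q c ≠ part q n b := by
  induction n with
  | zero =>
    intro b c hb hc hg
    obtain ⟨k, hk, hne⟩ := hg 0 0
    have := part_lt hq hsum hc hk hne
    simp only [part, Finset.range_zero, Finset.sum_empty] at this ⊢
    exact this.ne'
  | succ n ih =>
    intro b c hb hc hg
    have hg' : ∀ d N, ∃ k, N ≤ k ∧ c (k+1) ≠ d := by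
      intro d N
      obtain ⟨k, hk, hne⟩ := hg d (N+1)
      refine ⟨k-1, by omega, ?_⟩
      rwa [Nat.sub_add_cancel (by omega)]
    have hc' : ∀ n, (fun k => c (k+1)) n < s := fun k => hc _
    have hb' : ∀ n, (fun k => b (k+1)) n < s := fun k => hb _
    have hqc := hq _ (hc 0)
    have hqb := hq _ (hb 0)
    rw [val_succ hq hsum hc, part_succ]
    rcases lt_trichotomy (c 0) (b 0) with h | h | h
    · obtain ⟨k, _, hne⟩ := hg' (s-1) 0
      have h1 := val_lt_one hq hsum k hc' hne
      have h2 := beta_step hq hsum h (hb 0).le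
      have h3 := part_nonneg hq hb' n
      apply ne_of_lt
      nlinarith [mul_nonneg hqb.le h3]
    · rw [h]
      intro he
      exact ih hb' hc' hg' (mul_left_cancel₀ hqb.ne' (add_left_cancel he))
    · obtain ⟨k, hk, hne⟩ := hg' 0 0
      have h1 := part_lt hq hsum hc' hk hne
      simp only [part, Finset.range_zero, Finset.sum_empty] at h1
      have h2 := beta_step hq hsum h (hc 0).le
      have h3 := part_le_one hq hsum n hb'
      apply ne_of_gt
      nlinarith [mul_pos hqc h1]

end

lemma good {c : ℕ → ℕ} (h : ¬ ∃ L : ℝ, Filter.Tendsto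
    (fun n => (∑ i ∈ Finset.range n, (c i : ℝ)) / n) Filter.atTop (nhds L)) :
    ∀ d N, ∃ k, N ≤ k ∧ c k ≠ d := by
  intro d N
  by_contra! hc
  apply h
  refine ⟨d, ?_⟩
  have h1 : Tendsto (fun i => (c i : ℝ)) atTop (nhds (d : ℝ)) := by
    apply tendsto_const_nhds.congr'
    filter_upwards [eventually_ge_atTop N] with k hk
    rw [hc k hk]
  refine h1.cesaro.congr fun n => ?_
  rw [div_eq_inv_mul]

end QsAux

/-- The set `S` is everywhere discontinuous: between any two of its points there is a
point not in `S`. -/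
theorem Sset_everywhere_discontinuous (s : ℕ) (hs : 2 ≤ s) (q : ℕ → ℝ)
    (hq : ∀ i < s, 0 < q i) (hsum : ∑ i ∈ Finset.range s, q i = 1) :
    ∀ x ∈ Sset s q, ∀ y ∈ Sset s q, x < y →
      ∃ z : ℝ, x < z ∧ z < y ∧ z ∉ Sset s q := by
  rintro x - y ⟨b, hb, rfl, hnb⟩ hxy
  obtain ⟨n, hn⟩ := ((QsAux.tends hq hsum hb).eventually_const_lt hxy).exists
  obtain ⟨k, hk, hne⟩ := QsAux.good hnb 0 n
  refine ⟨_, hn, QsAux.part_lt hq hsum hb hk hne, ?_⟩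
  rintro ⟨c, hc, he, hnc⟩
  exact QsAux.val_ne hq hsum n hb hc (QsAux.good hnc) he.symm
end

section
/- The set S is superfractal: its Hausdorff–Besicovitch dimension equals 1, i.e. dimH(S) = 1. -/
open Filter

namespace QS

lemma beta_add {s : ℕ} {q : ℕ → ℝ} (hq : ∀ i < s, 0 < q i)
    (hsum : ∑ i ∈ Finset.range s, q i = 1) {d e : ℕ} (hde : d < e) (he : e ≤ s) :
    (∑ i ∈ Finset.range d, q i) + q d ≤ ∑ i ∈ Finset.range e, q i := by
  rw [← Finset.sum_range_succ]
  apply Finset.sum_le_sum_of_subset_of_nonneg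
  · intro i; simp only [Finset.mem_range]; omega
  · intro i hi _
    simp only [Finset.mem_range] at hi
    exact (hq i (by omega)).le

lemma beta_nonneg {s : ℕ} {q : ℕ → ℝ} (hq : ∀ i < s, 0 < q i) {d : ℕ} (hd : d < s) :
    0 ≤ ∑ i ∈ Finset.range d, q i :=
  Finset.sum_nonneg fun i hi => (hq i (by simp only [Finset.mem_range] at hi; omega)).le

lemma pr_pos {s : ℕ} {q : ℕ → ℝ} (hq : ∀ i < s, 0 < q i) {a : ℕ → ℕ} (ha : ∀ n, a n < s)
    (n : ℕ) : 0 < ∏ j ∈ Finset.range n, q (a j) :=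
  Finset.prod_pos fun i _ => hq _ (ha i)

lemma partial_le {s : ℕ} {q : ℕ → ℝ} (hq : ∀ i < s, 0 < q i)
    (hsum : ∑ i ∈ Finset.range s, q i = 1) {a : ℕ → ℕ} (ha : ∀ n, a n < s) (n : ℕ) :
    ∑ k ∈ Finset.range n, (∑ i ∈ Finset.range (a k), q i) * ∏ j ∈ Finset.range k, q (a j)
      + ∏ j ∈ Finset.range n, q (a j) ≤ 1 := by
  induction n with
  | zero => simp
  | succ n ih =>
    rw [Finset.sum_range_succ, Finset.prod_range_succ]
    have h1 := beta_add hq hsum (ha n) le_rfl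
    rw [hsum] at h1
    have h2 := pr_pos hq ha n
    nlinarith

lemma term_nonneg {s : ℕ} {q : ℕ → ℝ} (hq : ∀ i < s, 0 < q i) {a : ℕ → ℕ} (ha : ∀ n, a n < s)
    (k : ℕ) : 0 ≤ (∑ i ∈ Finset.range (a k), q i) * ∏ j ∈ Finset.range k, q (a j) :=
  mul_nonneg (beta_nonneg hq (ha k)) (pr_pos hq ha k).le

lemma summ {s : ℕ} {q : ℕ → ℝ} (hq : ∀ i < s, 0 < q i)
    (hsum : ∑ i ∈ Finset.range s, q i = 1) {a : ℕ → ℕ} (ha : ∀ n, a n < s) :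
    Summable fun k : ℕ => (∑ i ∈ Finset.range (a k), q i) * ∏ j ∈ Finset.range k, q (a j) :=
  summable_of_sum_range_le (c := 1) (term_nonneg hq ha) fun n => by
    have := partial_le hq hsum ha n
    have := pr_pos hq ha n
    linarith

lemma val_nonneg {s : ℕ} {q : ℕ → ℝ} (hq : ∀ i < s, 0 < q i) {a : ℕ → ℕ} (ha : ∀ n, a n < s) :
    0 ≤ qsVal q a := tsum_nonneg (term_nonneg hq ha)

lemma val_le_one {s : ℕ} {q : ℕ → ℝ} (hq : ∀ i < s, 0 < q i)
    (hsum : ∑ i ∈ Finset.range s, q i = 1) {a : ℕ → ℕ} (ha : ∀ n, a n < s) :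
    qsVal q a ≤ 1 :=
  Real.tsum_le_of_sum_range_le (term_nonneg hq ha) fun n => by
    have := partial_le hq hsum ha n
    have := pr_pos hq ha n
    linarith

lemma val_split {s : ℕ} {q : ℕ → ℝ} (hq : ∀ i < s, 0 < q i)
    (hsum : ∑ i ∈ Finset.range s, q i = 1) {a : ℕ → ℕ} (ha : ∀ n, a n < s) (n : ℕ) :
    qsVal q a =
      ∑ k ∈ Finset.range n, (∑ i ∈ Finset.range (a k), q i) * ∏ j ∈ Finset.range k, q (a j)
      + (∏ j ∈ Finset.range n, q (a j)) * qsVal q (fun k => a (n + k)) := by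
  unfold qsVal
  rw [← (summ hq hsum ha).sum_add_tsum_nat_add n, ← tsum_mul_left]
  congr 1
  apply tsum_congr
  intro k
  rw [add_comm k n, Finset.prod_range_add]
  ring

lemma val_lower {s : ℕ} {q : ℕ → ℝ} (hq : ∀ i < s, 0 < q i)
    (hsum : ∑ i ∈ Finset.range s, q i = 1) {a : ℕ → ℕ} (ha : ∀ n, a n < s) (n : ℕ) :
    (∑ i ∈ Finset.range (a n), q i) * ∏ j ∈ Finset.range n, q (a j) ≤ qsVal q a :=
  (summ hq hsum ha).le_tsum n fun j _ => term_nonneg hq ha j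

/-- two-sided control of the difference of values at the first differing digit -/
lemma val_diff {s : ℕ} {q : ℕ → ℝ} (hq : ∀ i < s, 0 < q i)
    (hsum : ∑ i ∈ Finset.range s, q i = 1) {a b : ℕ → ℕ} (ha : ∀ n, a n < s)
    (hb : ∀ n, b n < s) (n : ℕ) (h : ∀ i < n, a i = b i) :
    |qsVal q a - qsVal q b| ≤ ∏ j ∈ Finset.range n, q (a j) := by
  have hs1 : ∀ k ≤ n, ∏ j ∈ Finset.range k, q (a j) = ∏ j ∈ Finset.range k, q (b j) :=
    fun k hk => Finset.prod_congr rfl fun j hj => by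
      simp only [Finset.mem_range] at hj
      rw [h j (by omega)]
  have hs2 : ∑ k ∈ Finset.range n, (∑ i ∈ Finset.range (a k), q i) * ∏ j ∈ Finset.range k, q (a j)
    = ∑ k ∈ Finset.range n, (∑ i ∈ Finset.range (b k), q i) * ∏ j ∈ Finset.range k, q (b j) :=
    Finset.sum_congr rfl fun k hk => by
      simp only [Finset.mem_range] at hk
      rw [h k hk, hs1 k hk.le]
  rw [val_split hq hsum ha n, val_split hq hsum hb n, hs2, ← hs1 n le_rfl]
  have h1 := val_nonneg hq (a := fun k => a (n + k)) (fun k => ha _)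
  have h2 := val_nonneg hq (a := fun k => b (n + k)) (fun k => hb _)
  have h3 := val_le_one hq hsum (a := fun k => a (n + k)) (fun k => ha _)
  have h4 := val_le_one hq hsum (a := fun k => b (n + k)) (fun k => hb _)
  have h5 := pr_pos hq ha n
  rw [abs_le]
  constructor <;> nlinarith

lemma val_diff_lower {s : ℕ} {q : ℕ → ℝ} (hq : ∀ i < s, 0 < q i)
    (hsum : ∑ i ∈ Finset.range s, q i = 1) {a b : ℕ → ℕ} (ha : ∀ n, a n < s)
    (hb : ∀ n, b n < s) (n : ℕ) (h : ∀ i < n, a i = b i) (hlt : a n < b n) :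
    (∏ j ∈ Finset.range (n + 1), q (b j)) * qsVal q (fun k => b (n + 1 + k))
      ≤ qsVal q b - qsVal q a := by
  have hs1 : ∀ k ≤ n, ∏ j ∈ Finset.range k, q (a j) = ∏ j ∈ Finset.range k, q (b j) :=
    fun k hk => Finset.prod_congr rfl fun j hj => by
      simp only [Finset.mem_range] at hj
      rw [h j (by omega)]
  have hs2 : ∑ k ∈ Finset.range n, (∑ i ∈ Finset.range (a k), q i) * ∏ j ∈ Finset.range k, q (a j)
    = ∑ k ∈ Finset.range n, (∑ i ∈ Finset.range (b k), q i) * ∏ j ∈ Finset.range k, q (b j) :=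
    Finset.sum_congr rfl fun k hk => by
      simp only [Finset.mem_range] at hk
      rw [h k hk, hs1 k hk.le]
  rw [val_split hq hsum ha (n + 1), val_split hq hsum hb (n + 1), Finset.sum_range_succ,
    Finset.sum_range_succ, hs2, Finset.prod_range_succ (fun j => q (a j)), hs1 n le_rfl]
  have h3 := val_le_one hq hsum (a := fun k => a (n + 1 + k)) (fun k => ha _)
  have h5 := pr_pos hq hb n
  have h6 := hq _ (ha n)
  have h7 := beta_add hq hsum hlt (hb n).le
  have h8 : (∏ j ∈ Finset.range n, q (b j)) * q (a n) * qsVal q (fun k => a (n + 1 + k))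
      ≤ (∏ j ∈ Finset.range n, q (b j)) * q (a n) :=
    mul_le_of_le_one_right (by positivity) h3
  nlinarith

lemma digit_exists {s : ℕ} {q : ℕ → ℝ} (hq : ∀ i < s, 0 < q i)
    (hsum : ∑ i ∈ Finset.range s, q i = 1) (x : Set.Ico (0 : ℝ) 1) :
    ∃ d < s, ∃ y : Set.Ico (0 : ℝ) 1, (x : ℝ) = ∑ i ∈ Finset.range d, q i + q d * y := by
  obtain ⟨x, hx0, hx1⟩ := x
  have hex : ∃ d, x < ∑ i ∈ Finset.range d, q i := ⟨s, by rw [hsum]; exact hx1⟩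
  classical
  have hle : Nat.find hex ≤ s := Nat.find_min' hex (by rw [hsum]; exact hx1)
  have hsp := Nat.find_spec hex
  obtain ⟨d, hd⟩ : ∃ d, Nat.find hex = d + 1 := by
    refine Nat.exists_eq_succ_of_ne_zero fun h0 => ?_
    rw [h0] at hsp
    simp at hsp
    linarith
  have hmin := Nat.find_min hex (m := d) (by omega)
  rw [hd, Finset.sum_range_succ] at hsp
  push Not at hmin
  have hqd := hq d (by omega)
  refine ⟨d, by omega, ⟨(x - ∑ i ∈ Finset.range d, q i) / q d, ?_, ?_⟩, ?_⟩
  · exact div_nonneg (by linarith) hqd.le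
  · rw [div_lt_one hqd]; linarith
  · simp only
    field_simp
    ring

lemma val_surj {s : ℕ} {q : ℕ → ℝ} (hq : ∀ i < s, 0 < q i)
    (hsum : ∑ i ∈ Finset.range s, q i = 1) {ρ : ℝ} (hρ1 : ρ < 1)
    (hρ : ∀ i < s, q i ≤ ρ) (x : Set.Ico (0 : ℝ) 1) :
    ∃ a : ℕ → ℕ, (∀ n, a n < s) ∧ (x : ℝ) = qsVal q a := by
  choose D hD Y hY using digit_exists hq hsum
  set a : ℕ → ℕ := fun n => D (Y^[n] x) with hadef
  have ha : ∀ n, a n < s := fun n => hD _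
  refine ⟨a, ha, ?_⟩
  have key : ∀ n, (x : ℝ) = ∑ k ∈ Finset.range n,
      (∑ i ∈ Finset.range (a k), q i) * ∏ j ∈ Finset.range k, q (a j)
      + (∏ j ∈ Finset.range n, q (a j)) * (Y^[n] x : Set.Ico (0 : ℝ) 1) := by
    intro n
    induction n with
    | zero => simp
    | succ n ih =>
      rw [Finset.sum_range_succ, Finset.prod_range_succ, Function.iterate_succ_apply']
      have h1 : ((Y^[n] x : Set.Ico (0 : ℝ) 1) : ℝ)
        = ∑ i ∈ Finset.range (a n), q i + q (a n) * (Y (Y^[n] x) : Set.Ico (0 : ℝ) 1) := hY (Y^[n] x)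
      rw [h1] at ih
      rw [ih]
      ring
  have hρ0 : 0 ≤ ρ := (hq _ (ha 0)).le.trans (hρ _ (ha 0))
  have hb : ∀ n, |(x : ℝ) - qsVal q a| ≤ ρ ^ n := by
    intro n
    have hp : ∏ j ∈ Finset.range n, q (a j) ≤ ρ ^ n := by
      calc _ ≤ ∏ j ∈ Finset.range n, ρ := Finset.prod_le_prod (fun i _ => (hq _ (ha i)).le)
              (fun i _ => hρ _ (ha i))
        _ = _ := by simp
    refine le_trans ?_ hp
    rw [val_split hq hsum ha n, key n]
    have h1 := val_nonneg hq (a := fun k => a (n + k)) (fun k => ha _)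
    have h3 := val_le_one hq hsum (a := fun k => a (n + k)) (fun k => ha _)
    have h5 := pr_pos hq ha n
    have h6 := (Y^[n] x).2.1
    have h7 := (Y^[n] x).2.2
    rw [abs_le]
    constructor <;> nlinarith
  have hlim := ge_of_tendsto' (tendsto_pow_atTop_nhds_zero_of_lt_one hρ0 hρ1) hb
  have := abs_nonpos_iff.1 hlim
  linarith

/-- insert two digits after every `K` digits -/
def ins (s K : ℕ) (c a : ℕ → ℕ) (n : ℕ) : ℕ :=
  if n % (K + 2) < K then a (n / (K + 2) * K + n % (K + 2))
  else if n % (K + 2) = K then s - 1 else c (n / (K + 2))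

lemma divmod (K J r : ℕ) (hr : r < K + 2) :
    (J * (K + 2) + r) / (K + 2) = J ∧ (J * (K + 2) + r) % (K + 2) = r := by
  constructor
  · rw [add_comm, Nat.add_mul_div_right _ _ (by omega), Nat.div_eq_of_lt hr, zero_add]
  · rw [add_comm, Nat.add_mul_mod_self_right, Nat.mod_eq_of_lt hr]

lemma ins_lt_K (s K : ℕ) (c a : ℕ → ℕ) (J r : ℕ) (hr : r < K) :
    ins s K c a (J * (K + 2) + r) = a (J * K + r) := by
  obtain ⟨h1, h2⟩ := divmod K J r (by omega)
  unfold ins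
  rw [h1, h2, if_pos hr]

lemma ins_K (s K : ℕ) (c a : ℕ → ℕ) (J : ℕ) : ins s K c a (J * (K + 2) + K) = s - 1 := by
  obtain ⟨h1, h2⟩ := divmod K J K (by omega)
  unfold ins
  rw [h1, h2, if_neg (by omega), if_pos rfl]

lemma ins_K1 (s K : ℕ) (c a : ℕ → ℕ) (J : ℕ) : ins s K c a (J * (K + 2) + (K + 1)) = c J := by
  obtain ⟨h1, h2⟩ := divmod K J (K + 1) (by omega)
  unfold ins
  rw [h1, h2, if_neg (by omega), if_neg (by omega)]

lemma ins_lt {s K : ℕ} {c a : ℕ → ℕ} (hs : 2 ≤ s) (hc : ∀ n, c n < s) (ha : ∀ n, a n < s)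
    (n : ℕ) : ins s K c a n < s := by
  unfold ins
  split_ifs
  · exact ha _
  · omega
  · exact hc _

lemma ins_sum (s K : ℕ) (c a : ℕ → ℕ) (J : ℕ) :
    ∑ i ∈ Finset.range (J * (K + 2)), (ins s K c a i : ℝ)
      = ∑ i ∈ Finset.range (J * K), (a i : ℝ) + J * ((s - 1 : ℕ) : ℝ)
        + ∑ i ∈ Finset.range J, (c i : ℝ) := by
  induction J with
  | zero => simp
  | succ J ih =>
    have hstep : ∑ r ∈ Finset.range K, (ins s K c a (J * (K + 2) + r) : ℝ)
        = ∑ r ∈ Finset.range K, (a (J * K + r) : ℝ) :=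
      Finset.sum_congr rfl (fun r hr => by
        rw [ins_lt_K s K c a J r (by simpa using hr)])
    rw [add_mul, one_mul, Finset.sum_range_add, add_mul, one_mul, Finset.sum_range_add _ (J * K) K,
      Finset.sum_range_succ _ J, ih, Finset.sum_range_succ _ (K + 1), Finset.sum_range_succ _ K,
      ins_K, ins_K1, hstep]
    push_cast
    ring

lemma ins_prod {s K : ℕ} {q : ℕ → ℝ} {c a : ℕ → ℕ} (hs : 2 ≤ s) (hq : ∀ i < s, 0 < q i)
    (hc : ∀ n, c n < s) (ha : ∀ n, a n < s) {c0 : ℝ} (hc0 : 0 < c0) (hc0q : ∀ i < s, c0 ≤ q i)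
    (J r : ℕ) (hr : r ≤ K) :
    (∏ i ∈ Finset.range (J * K + r), q (a i)) * (c0 ^ 2) ^ J
      ≤ ∏ i ∈ Finset.range (J * (K + 2) + r), q (ins s K c a i) := by
  have step : ∀ J r, r ≤ K → ∏ i ∈ Finset.range r, q (ins s K c a (J * (K + 2) + i))
      = ∏ i ∈ Finset.range r, q (a (J * K + i)) := fun J r hr =>
    Finset.prod_congr rfl (fun i hi => by
      rw [ins_lt_K s K c a J i (by simp only [Finset.mem_range] at hi; omega)])
  rw [Finset.prod_range_add, Finset.prod_range_add, step J r hr, mul_right_comm]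
  refine mul_le_mul_of_nonneg_right ?_ (Finset.prod_nonneg fun i _ => (hq _ (ha _)).le)
  clear hr
  induction J with
  | zero => simp
  | succ J ih =>
    rw [add_mul, one_mul, Finset.prod_range_add, add_mul, one_mul, Finset.prod_range_add,
      Finset.prod_range_succ _ (K + 1), Finset.prod_range_succ _ K, step J K le_rfl, ins_K, ins_K1,
      pow_succ]
    have h1 := hc0q (s - 1) (by omega)
    have h2 := hc0q (c J) (hc J)
    have h3 : 0 < ∏ x ∈ Finset.range K, q (a (J * K + x)) := Finset.prod_pos fun i _ => hq _ (ha _)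
    have h4 := pr_pos hq ha (J * K)
    have h5 : c0 ^ 2 ≤ q (s - 1) * q (c J) := by rw [sq]; gcongr; linarith
    calc _ = ((∏ x ∈ Finset.range (J * K), q (a x)) * (c0 ^ 2) ^ J)
          * ((∏ x ∈ Finset.range K, q (a (J * K + x))) * c0 ^ 2) := by ring
      _ ≤ (∏ x ∈ Finset.range (J * (K + 2)), q (ins s K c a x))
          * ((∏ x ∈ Finset.range K, q (a (J * K + x))) * (q (s - 1) * q (c J))) := by
        gcongr
        exact (pr_pos hq (ins_lt hs hc ha) _).le
      _ = _ := by ring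

/-- tails of `ins` are bounded below -/
lemma ins_tail {s K : ℕ} {q : ℕ → ℝ} {c a : ℕ → ℕ} (hs : 2 ≤ s) (hq : ∀ i < s, 0 < q i)
    (hsum : ∑ i ∈ Finset.range s, q i = 1)
    (hc : ∀ n, c n < s) (ha : ∀ n, a n < s) {c0 : ℝ} (hc0 : 0 < c0) (hc1 : c0 ≤ 1)
    (hc0q : ∀ i < s, c0 ≤ q i) (N : ℕ) :
    c0 ^ (2 * K + 3) ≤ qsVal q (fun k => ins s K c a (N + k)) := by
  have hb : ∀ k, ins s K c a (N + k) < s := fun k => ins_lt hs hc ha _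
  obtain ⟨k, hk, hNk⟩ : ∃ k ≤ 2 * K + 2, ins s K c a (N + k) = s - 1 := by
    have h1 := Nat.div_add_mod N (K + 2)
    have h2 := Nat.mod_lt N (show 0 < K + 2 by omega)
    rw [mul_comm] at h1
    refine ⟨(K + 2) + K - N % (K + 2), by omega, ?_⟩
    rw [← ins_K s K c a (N / (K + 2) + 1)]
    congr 1
    rw [add_mul]
    omega
  refine le_trans ?_ (val_lower hq hsum hb k)
  rw [hNk, show 2 * K + 3 = 1 + (2 * K + 2) by ring, pow_add, pow_one]
  have h1 : c0 ≤ ∑ i ∈ Finset.range (s - 1), q i := by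
    have h := beta_add hq hsum (show 0 < s - 1 by omega) (by omega)
    simp at h
    exact (hc0q 0 (by omega)).trans h
  have h2 : c0 ^ k ≤ ∏ j ∈ Finset.range k, q (ins s K c a (N + j)) := by
    calc c0 ^ k = ∏ j ∈ Finset.range k, c0 := by simp
      _ ≤ _ := Finset.prod_le_prod (fun _ _ => hc0.le) fun i _ => hc0q _ (hb i)
  have h3 : c0 ^ (2 * K + 2) ≤ c0 ^ k := pow_le_pow_of_le_one hc0.le hc1 hk
  have := h3.trans h2
  gcongr
  linarith

lemma holder_wlog {s K : ℕ} {q : ℕ → ℝ} {c a b : ℕ → ℕ} (hs : 2 ≤ s) (hq : ∀ i < s, 0 < q i)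
    (hsum : ∑ i ∈ Finset.range s, q i = 1)
    (hc : ∀ n, c n < s) (ha : ∀ n, a n < s) (hb : ∀ n, b n < s)
    {c0 ρ r : ℝ} (hc0 : 0 < c0) (hc1 : c0 ≤ 1)
    (hc0q : ∀ i < s, c0 ≤ q i) (hρ1 : ρ < 1) (hρq : ∀ i < s, q i ≤ ρ)
    (hr0 : 0 < r) (hr1 : r < 1) (hKr : (ρ ^ K) ^ (1 - r) ≤ (c0 ^ 2) ^ r)
    (N : ℕ) (hN : ∀ i < N, ins s K c a i = ins s K c b i)
    (hlt : ins s K c a N < ins s K c b N) :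
    |qsVal q b - qsVal q a| ≤ ((c0 ^ (2 * K + 4))⁻¹) ^ r *
      |qsVal q (ins s K c b) - qsVal q (ins s K c a)| ^ r := by
  have hρ0 : 0 < ρ := (hq 0 (by omega)).trans_le (hρq 0 (by omega))
  have hia := ins_lt (K := K) hs hc ha
  have hib := ins_lt (K := K) hs hc hb
  obtain ⟨J, t, ht, rfl⟩ : ∃ J t, t < K + 2 ∧ N = J * (K + 2) + t :=
    ⟨N / (K + 2), N % (K + 2), Nat.mod_lt _ (by omega), (Nat.div_add_mod' _ _).symm⟩
  have htK : t < K := by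
    by_contra hcon
    rcases (show t = K ∨ t = K + 1 by omega) with rfl | rfl
    · rw [ins_K, ins_K] at hlt; omega
    · rw [ins_K1, ins_K1] at hlt; omega
  have hagree : ∀ i < J * K + t, b i = a i := by
    intro i hi
    have hK : 0 < K := by omega
    have h1 := Nat.div_add_mod' i K
    have h2 := Nat.mod_lt i hK
    have h3 := ins_lt_K s K c a (i / K) (i % K) h2
    have h4 := ins_lt_K s K c b (i / K) (i % K) h2
    rw [h1] at h3 h4
    rw [← h3, ← h4]
    refine (hN _ ?_).symm
    rcases lt_or_ge (i / K) J with h | h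
    · have : (i / K + 1) * (K + 2) ≤ J * (K + 2) := Nat.mul_le_mul_right _ h
      rw [add_mul] at this
      omega
    · have hJ : i / K = J := by
        refine le_antisymm ?_ h
        rw [← Nat.lt_succ_iff, Nat.div_lt_iff_lt_mul hK, Nat.succ_mul]
        omega
      rw [hJ] at h1 ⊢
      omega
  have hup := val_diff hq hsum hb ha _ hagree
  have hlow := val_diff_lower hq hsum hia hib _ hN hlt
  have htail := ins_tail (K := K) hs hq hsum hc hb hc0 hc1 hc0q (J * (K + 2) + t + 1)
  have hpr := ins_prod hs hq hc hb hc0 hc0q J t htK.le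
  set P := ∏ j ∈ Finset.range (J * K + t), q (b j) with hP
  have hPpos : 0 < P := pr_pos hq hb _
  set F := ∏ j ∈ Finset.range (J * (K + 2) + t), q (ins s K c b j) with hF
  have hFpos : 0 < F := pr_pos hq hib _
  have hFlow : F * c0 ^ (2 * K + 4) ≤ qsVal q (ins s K c b) - qsVal q (ins s K c a) := by
    refine le_trans ?_ hlow
    rw [Finset.prod_range_succ, ← hF]
    have := hc0q _ (hib (J * (K + 2) + t))
    calc F * c0 ^ (2 * K + 4) = F * c0 * c0 ^ (2 * K + 3) := by ring
      _ ≤ _ := by gcongr; exact mul_nonneg hFpos.le (by linarith)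
  have hPρ : P ≤ (ρ ^ K) ^ J := by
    rw [← pow_mul, mul_comm K J]
    calc P ≤ ∏ j ∈ Finset.range (J * K + t), ρ := Finset.prod_le_prod (fun i _ => (hq _ (hb i)).le)
              (fun i _ => hρq _ (hb i))
      _ = ρ ^ (J * K + t) := by simp
      _ ≤ _ := pow_le_pow_of_le_one hρ0.le hρ1.le (by omega)
  have hPF : P ≤ F ^ r := by
    calc P = P ^ r * P ^ (1 - r) := by rw [← Real.rpow_add hPpos]; simp
      _ ≤ P ^ r * ((ρ ^ K) ^ J) ^ (1 - r) := by
        gcongr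
      _ = P ^ r * ((ρ ^ K) ^ (1 - r)) ^ J := by
        rw [Real.rpow_pow_comm (by positivity)]
      _ ≤ P ^ r * ((c0 ^ 2) ^ r) ^ J := by gcongr
      _ = (P * (c0 ^ 2) ^ J) ^ r := by
        rw [Real.mul_rpow hPpos.le (by positivity), Real.rpow_pow_comm (by positivity)]
      _ ≤ F ^ r := by gcongr
  have hMpos : 0 < c0 ^ (2 * K + 4) := by positivity
  refine hup.trans (hPF.trans ?_)
  rw [← Real.mul_rpow (by positivity) (abs_nonneg _)]
  gcongr
  rw [inv_mul_eq_div, le_div_iff₀ hMpos]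
  exact hFlow.trans (le_abs_self _)

lemma holder {s K : ℕ} {q : ℕ → ℝ} {c a b : ℕ → ℕ} (hs : 2 ≤ s) (hq : ∀ i < s, 0 < q i)
    (hsum : ∑ i ∈ Finset.range s, q i = 1)
    (hc : ∀ n, c n < s) (ha : ∀ n, a n < s) (hb : ∀ n, b n < s)
    {c0 ρ r : ℝ} (hc0 : 0 < c0) (hc1 : c0 ≤ 1)
    (hc0q : ∀ i < s, c0 ≤ q i) (hρ1 : ρ < 1) (hρq : ∀ i < s, q i ≤ ρ)
    (hr0 : 0 < r) (hr1 : r < 1) (hKr : (ρ ^ K) ^ (1 - r) ≤ (c0 ^ 2) ^ r) (hK : 0 < K) :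
    |qsVal q b - qsVal q a| ≤ ((c0 ^ (2 * K + 4))⁻¹) ^ r *
      |qsVal q (ins s K c b) - qsVal q (ins s K c a)| ^ r := by
  classical
  by_cases hex : ∃ N, ins s K c a N ≠ ins s K c b N
  · have h1 := Nat.find_spec hex
    have h2 : ∀ i < Nat.find hex, ins s K c a i = ins s K c b i := fun i hi => by
      simpa using Nat.find_min hex hi
    rcases lt_or_gt_of_ne h1 with h | h
    · exact holder_wlog hs hq hsum hc ha hb hc0 hc1 hc0q hρ1 hρq hr0 hr1 hKr _ h2 h
    · rw [abs_sub_comm, abs_sub_comm (qsVal q (ins s K c b))]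
      exact holder_wlog hs hq hsum hc hb ha hc0 hc1 hc0q hρ1 hρq hr0 hr1 hKr _
        (fun i hi => (h2 i hi).symm) h
  · push Not at hex
    have : a = b := by
      funext i
      have h1 := Nat.div_add_mod' i K
      have h2 := Nat.mod_lt i hK
      have h3 := ins_lt_K s K c a (i / K) (i % K) h2
      have h4 := ins_lt_K s K c b (i / K) (i % K) h2
      rw [h1] at h3 h4
      rw [← h3, ← h4, hex]
    subst this
    simp only [sub_self, abs_zero]
    positivity

/-- sequence without asymptotic mean -/
def cseq (s j : ℕ) : ℕ := if Odd (Nat.log 2 j) then s - 1 else 0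

lemma cseq_lt {s : ℕ} (hs : 2 ≤ s) (j : ℕ) : cseq s j < s := by
  unfold cseq; split_ifs <;> omega

lemma cseq_sum (s k : ℕ) : ∑ i ∈ Finset.range (2 ^ (k + 1)), (cseq s i : ℝ)
    = ∑ i ∈ Finset.range (2 ^ k), (cseq s i : ℝ)
      + 2 ^ k * (if Odd k then ((s - 1 : ℕ) : ℝ) else 0) := by
  rw [pow_succ, mul_two, Finset.sum_range_add]
  congr 1
  rw [Finset.sum_congr rfl (g := fun _ => (if Odd k then ((s - 1 : ℕ) : ℝ) else 0))]
  · simp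
  · intro i hi
    simp only [Finset.mem_range] at hi
    have : Nat.log 2 (2 ^ k + i) = k := by
      rw [Nat.log_eq_iff (Or.inr ⟨by norm_num, by positivity⟩)]
      constructor
      · omega
      · rw [pow_succ]; omega
    unfold cseq
    rw [this]
    split_ifs <;> simp

lemma cseq_no_mean {s : ℕ} (hs : 2 ≤ s) (L : ℝ) :
    ¬ Tendsto (fun n : ℕ => (∑ i ∈ Finset.range n, (cseq s i : ℝ)) / n) atTop (nhds L) := by
  intro h
  have hpow : Tendsto (fun k : ℕ => 2 ^ k) atTop (atTop : Filter ℕ) :=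
    tendsto_pow_atTop_atTop_of_one_lt (by norm_num)
  have h1 := h.comp hpow
  set u : ℕ → ℝ := (fun n : ℕ => (∑ i ∈ Finset.range n, (cseq s i : ℝ)) / n) ∘ fun k : ℕ => 2 ^ k
    with hu
  have hrec : ∀ k, u (k + 1) = (u k + if Odd k then ((s - 1 : ℕ) : ℝ) else 0) / 2 := by
    intro k
    simp only [hu, Function.comp]
    rw [cseq_sum]
    push_cast
    rw [pow_succ]
    field_simp
  have h2 : Tendsto (fun k => 2 * u (k + 1) - u k) atTop (nhds (2 * L - L)) :=
    ((h1.comp (tendsto_add_atTop_nat 1)).const_mul 2).sub h1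
  have h3 : (fun k => 2 * u (k + 1) - u k) = fun k => if Odd k then ((s - 1 : ℕ) : ℝ) else 0 := by
    funext k; rw [hrec]; ring
  rw [h3] at h2
  have he := h2.comp (tendsto_id.const_mul_atTop' (show 0 < 2 by norm_num))
  have ho := h2.comp ((tendsto_add_atTop_nat 1).comp
    (tendsto_id.const_mul_atTop' (show 0 < 2 by norm_num)))
  have he' : ((fun k => if Odd k then ((s - 1 : ℕ) : ℝ) else 0) ∘ fun x : ℕ => 2 * id x)
      = fun _ => 0 := by
    funext k; simp
  have ho' : ((fun k => if Odd k then ((s - 1 : ℕ) : ℝ) else 0) ∘ ((fun a => a + 1) ∘ fun x : ℕ => 2 * id x))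
      = fun _ => ((s - 1 : ℕ) : ℝ) := by
    funext k; simp
  rw [he'] at he
  rw [ho'] at ho
  have e1 := tendsto_nhds_unique he tendsto_const_nhds
  have e2 := tendsto_nhds_unique ho tendsto_const_nhds
  have : ((s - 1 : ℕ) : ℝ) = 0 := by rw [← e2, e1]
  rw [Nat.cast_eq_zero] at this
  omega

lemma ins_no_mean {s K : ℕ} {a : ℕ → ℕ} (hs : 2 ≤ s) (hK : 0 < K)
    (h : ∃ L : ℝ, Tendsto (fun n : ℕ => (∑ i ∈ Finset.range n, (a i : ℝ)) / n) atTop (nhds L)) :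
    ¬ ∃ L : ℝ, Tendsto (fun n : ℕ => (∑ i ∈ Finset.range n, (ins s K (cseq s) a i : ℝ)) / n)
      atTop (nhds L) := by
  rintro ⟨M, hM⟩
  obtain ⟨L, hL⟩ := h
  have t1 : Tendsto (fun J : ℕ => J * K) atTop atTop := tendsto_id.atTop_mul_const' hK
  have t2 : Tendsto (fun J : ℕ => J * (K + 2)) atTop atTop :=
    tendsto_id.atTop_mul_const' (by omega)
  have h1 := (hL.comp t1).mul_const (K : ℝ)
  have h2 := (hM.comp t2).mul_const ((K : ℝ) + 2)
  have h3 := (h2.sub h1).sub_const ((s - 1 : ℕ) : ℝ)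
  refine cseq_no_mean hs _ (h3.congr' ?_)
  filter_upwards [eventually_gt_atTop 0] with J hJ
  have hJ' : (0 : ℝ) < J := by exact_mod_cast hJ
  have hK' : (0 : ℝ) < K := by exact_mod_cast hK
  simp only [Function.comp]
  rw [ins_sum]
  push_cast
  field_simp
  ring

lemma main_bound {s : ℕ} (hs : 2 ≤ s) {q : ℕ → ℝ}
    (hq : ∀ i < s, 0 < q i) (hsum : ∑ i ∈ Finset.range s, q i = 1)
    (r : NNReal) (hr0 : 0 < r) (hr1 : r < 1) : (r : ENNReal) ≤ dimH (Sset s q) := by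
  obtain ⟨c0, hc0, hc0q⟩ : ∃ c0 : ℝ, 0 < c0 ∧ ∀ i < s, c0 ≤ q i := by
    obtain ⟨m, hm, hmin⟩ := Finset.exists_min_image (Finset.range s) q ⟨0, by simp; omega⟩
    simp only [Finset.mem_range] at hm hmin
    exact ⟨q m, hq m hm, hmin⟩
  have hρq : ∀ i < s, q i ≤ 1 - c0 := by
    intro i hi
    obtain ⟨j, hj, hij⟩ : ∃ j < s, j ≠ i := by
      by_cases h : i = 0
      · exact ⟨1, by omega, by omega⟩
      · exact ⟨0, by omega, by omega⟩
    have h1 : ∑ k ∈ ({i, j} : Finset ℕ), q k ≤ ∑ k ∈ Finset.range s, q k := by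
      apply Finset.sum_le_sum_of_subset_of_nonneg
      · intro k; simp only [Finset.mem_insert, Finset.mem_singleton, Finset.mem_range]; omega
      · intro k hk _
        exact (hq k (by simpa using hk)).le
    rw [Finset.sum_pair hij.symm, hsum] at h1
    have := hc0q j hj
    linarith
  have hρ1 : 1 - c0 < 1 := by linarith
  have hρ0 : 0 < 1 - c0 := (hq 0 (by omega)).trans_le (hρq 0 (by omega))
  have hr0' : (0 : ℝ) < r := by exact_mod_cast hr0
  have hr1' : (r : ℝ) < 1 := by exact_mod_cast hr1
  obtain ⟨K, hK, hKr⟩ : ∃ K : ℕ, 0 < K ∧ ((1 - c0) ^ K) ^ (1 - (r : ℝ)) ≤ (c0 ^ 2) ^ (r : ℝ) := by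
    have hb1 : (1 - c0) ^ (1 - (r : ℝ)) < 1 := Real.rpow_lt_one hρ0.le hρ1 (by linarith)
    have ht := tendsto_pow_atTop_nhds_zero_of_lt_one (Real.rpow_nonneg hρ0.le _) hb1
    have hp : 0 < (c0 ^ 2) ^ (r : ℝ) := by positivity
    obtain ⟨K, h1, h2⟩ := ((eventually_gt_atTop 0).and (ht.eventually_lt_const hp)).exists
    refine ⟨K, h1, ?_⟩
    rw [← Real.rpow_pow_comm hρ0.le]
    exact h2.le
  set E : Set (ℕ → ℕ) := {a | (∀ n, a n < s) ∧
    ∃ L : ℝ, Tendsto (fun n : ℕ => (∑ i ∈ Finset.range n, (a i : ℝ)) / n) atTop (nhds L)} with hE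
  set f := ins s K (cseq s) with hf
  set D : Set ℝ := (fun a => qsVal q (f a)) '' E with hD
  have hDS : D ⊆ Sset s q := by
    rintro _ ⟨a, ⟨ha, hm⟩, rfl⟩
    exact ⟨f a, ins_lt hs (cseq_lt hs) ha, rfl, ins_no_mean hs hK hm⟩
  have hhol : ∀ a ∈ E, ∀ b ∈ E, |qsVal q b - qsVal q a| ≤ ((c0 ^ (2 * K + 4))⁻¹) ^ (r : ℝ) *
      |qsVal q (f b) - qsVal q (f a)| ^ (r : ℝ) := fun a ha b hb =>
    holder hs hq hsum (cseq_lt hs) ha.1 hb.1 hc0 (by linarith) hc0q hρ1 hρq hr0' hr1' hKr hK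
  have hch : ∀ y : ℝ, ∃ a : ℕ → ℕ, y ∈ D → a ∈ E ∧ qsVal q (f a) = y := by
    intro y
    by_cases hy : y ∈ D
    · obtain ⟨a, ha, h⟩ := hy
      exact ⟨a, fun _ => ⟨ha, h⟩⟩
    · exact ⟨fun _ => 0, fun h => absurd h hy⟩
  choose A hA using hch
  set g : ℝ → ℝ := fun y => qsVal q (A y) with hg
  have hC0 : 0 ≤ ((c0 ^ (2 * K + 4))⁻¹) ^ (r : ℝ) := by positivity
  have hgH : HolderOnWith (Real.toNNReal (((c0 ^ (2 * K + 4))⁻¹) ^ (r : ℝ))) r g D := by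
    intro x hx y hy
    obtain ⟨hx1, hx2⟩ := hA x hx
    obtain ⟨hy1, hy2⟩ := hA y hy
    have h := hhol _ hy1 _ hx1
    rw [hx2, hy2] at h
    rw [edist_dist, edist_dist, Real.dist_eq, Real.dist_eq,
      ENNReal.ofReal_rpow_of_nonneg (abs_nonneg _) hr0'.le]
    change _ ≤ ENNReal.ofReal _ * _
    rw [← ENNReal.ofReal_mul hC0]
    exact ENNReal.ofReal_le_ofReal h
  have hdim := hgH.dimH_image_le hr0
  have himg : qsVal q '' E ⊆ g '' D := by
    rintro _ ⟨a, ha, rfl⟩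
    refine ⟨qsVal q (f a), ⟨a, ha, rfl⟩, ?_⟩
    obtain ⟨h1, h2⟩ := hA (qsVal q (f a)) ⟨a, ha, rfl⟩
    have h := hhol _ ha _ h1
    rw [h2, sub_self, abs_zero, Real.zero_rpow hr0'.ne', mul_zero] at h
    have := abs_nonpos_iff.1 h
    simp only [hg]
    linarith
  have hcov : Set.Ico (0 : ℝ) 1 ⊆ qsVal q '' E ∪ Sset s q := by
    intro x hx
    obtain ⟨a, ha, hxa⟩ := val_surj hq hsum hρ1 hρq ⟨x, hx⟩
    simp only at hxa
    by_cases hm : ∃ L : ℝ, Tendsto (fun n : ℕ => (∑ i ∈ Finset.range n, (a i : ℝ)) / n)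
        atTop (nhds L)
    · exact Or.inl ⟨a, ⟨ha, hm⟩, hxa.symm⟩
    · exact Or.inr ⟨a, ha, hxa, hm⟩
  have hone : dimH (Set.Ico (0 : ℝ) 1) = 1 := by
    rw [Real.dimH_of_nonempty_interior (by rw [interior_Ico]; exact ⟨1 / 2, by norm_num⟩)]
    simp
  have h1 := dimH_mono hcov
  rw [hone, dimH_union] at h1
  have hr1e : (r : ENNReal) ≤ 1 := by exact_mod_cast hr1.le
  rcases le_max_iff.1 h1 with h | h
  · have h2 := h.trans ((dimH_mono himg).trans (hdim.trans
      (ENNReal.div_le_div_right (dimH_mono hDS) _)))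
    rw [ENNReal.le_div_iff_mul_le (Or.inl (by exact_mod_cast hr0.ne')) (Or.inl ENNReal.coe_ne_top),
      one_mul] at h2
    exact h2
  · exact hr1e.trans h

end QS

theorem Sset_dimH_eq_one (s : ℕ) (hs : 2 ≤ s) (q : ℕ → ℝ)
    (hq : ∀ i < s, 0 < q i) (hsum : ∑ i ∈ Finset.range s, q i = 1) :
    dimH (Sset s q) = 1 := by
  apply le_antisymm
  · calc dimH (Sset s q) ≤ dimH (Set.univ : Set ℝ) := dimH_mono (Set.subset_univ _)
      _ = 1 := Real.dimH_univ
  · refine le_of_forall_lt fun x hx => ?_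
    obtain ⟨r, hxr, hr⟩ := ENNReal.lt_iff_exists_nnreal_btwn.1 hx
    have hr0 : 0 < r := by
      have := (zero_le (a := x)).trans_lt hxr
      exact_mod_cast this
    exact hxr.trans_le (QS.main_bound hs hq hsum r hr0 (by exact_mod_cast hr))
end

section
/- The set M_0 is dense in the interval [0,1]. -/
open Filter

/-- The value of a ternary digit sequence: `val₃(a) = ∑_{k≥0} a k · 3^{-(k+1)}`. -/
noncomputable def val3 (a : ℕ → ℕ) : ℝ :=
  ∑' k : ℕ, (a k : ℝ) / 3 ^ (k + 1)

/-- For `i ∈ {0,1,2}`, `Mset i` is the set of values of ternary digit sequences for which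
the asymptotic mean of digits and the frequency of the digit `i` both exist and are
equal. -/
noncomputable def Mset (i : ℕ) : Set ℝ :=
  {x | ∃ a : ℕ → ℕ, (∀ n, a n < 3) ∧ x = val3 a ∧
    ∃ L : ℝ,
      Filter.Tendsto (fun n => (∑ k ∈ Finset.range n, (a k : ℝ)) / n)
        Filter.atTop (nhds L) ∧
      Filter.Tendsto
        (fun n => (((Finset.range n).filter (fun j => a j = i)).card : ℝ) / n)
        Filter.atTop (nhds L)}

theorem aux_cesaro (f g : ℕ → ℝ) (N : ℕ) (C : ℝ) (hg : ∀ k, |g k| ≤ C)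
    (h : ∀ k, N ≤ k → f k - 1 / 2 = g (k + 1) - g k) :
    Filter.Tendsto (fun n : ℕ => (∑ k ∈ Finset.range n, f k) / (n : ℝ))
      Filter.atTop (nhds (1 / 2)) := by
  set D : ℝ := (∑ k ∈ Finset.range N, f k) - N / 2 - g N with hD
  have key : ∀ n, N ≤ n → ∑ k ∈ Finset.range n, f k = n / 2 + g n + D := by
    intro n hn
    induction n, hn using Nat.le_induction with
    | base => rw [hD]; ring
    | succ n hn ih =>
      rw [Finset.sum_range_succ, ih]
      have := h n hn
      push_cast
      linarith
  have hz : Filter.Tendsto (fun n : ℕ => (g n + D) / (n : ℝ)) Filter.atTop (nhds 0) := by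
    apply squeeze_zero_norm (a := fun n : ℕ => (C + |D|) / (n : ℝ))
    · intro n
      rw [norm_div, Real.norm_eq_abs, Real.norm_natCast]
      gcongr
      exact (abs_add_le _ _).trans (by linarith [hg n])
    · exact tendsto_const_div_atTop_nhds_zero_nat _
  have h2 := hz.const_add (1 / 2 : ℝ)
  rw [add_zero] at h2
  refine h2.congr' ?_
  filter_upwards [Filter.eventually_ge_atTop (N + 1)] with n hn
  rw [key n (by omega)]
  have : (n : ℝ) ≠ 0 := by
    have : n ≠ 0 := by omega
    exact_mod_cast this
  field_simp
  ring

theorem aux_val (a : ℕ → ℕ) (ha : ∀ n, a n < 3) (N : ℕ) :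
    |val3 a - ∑ k ∈ Finset.range N, (a k : ℝ) / 3 ^ (k + 1)| ≤ (1 / 3) ^ N := by
  have hle : ∀ k, (a k : ℝ) / 3 ^ (k + 1) ≤ 2 / 3 * (1 / 3) ^ k := by
    intro k
    have h2 : (a k : ℝ) ≤ 2 := by exact_mod_cast Nat.le_of_lt_succ (ha k)
    rw [one_div_pow, pow_succ]
    have : (0 : ℝ) < 3 ^ k := by positivity
    field_simp
    linarith
  have hgs : HasSum (fun k : ℕ => (2 / 3 : ℝ) * (1 / 3) ^ k) 1 := by
    have := (hasSum_geometric_of_lt_one (r := (1 / 3 : ℝ)) (by norm_num) (by norm_num)).mul_left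
      (2 / 3)
    have e : (2 / 3 : ℝ) * (1 - 1 / 3)⁻¹ = 1 := by norm_num
    rw [e] at this
    exact this
  have hs : Summable (fun k => (a k : ℝ) / 3 ^ (k + 1)) :=
    Summable.of_nonneg_of_le (fun k => by positivity) hle hgs.summable
  have h1 := hs.sum_add_tsum_nat_add N
  have hv : val3 a = ∑' k, (a k : ℝ) / 3 ^ (k + 1) := rfl
  rw [hv, ← h1, add_sub_cancel_left, abs_of_nonneg (tsum_nonneg fun k => by positivity)]
  have hgs2 := hgs.mul_left ((1 / 3 : ℝ) ^ N)
  rw [mul_one] at hgs2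
  rw [← hgs2.tsum_eq]
  refine Summable.tsum_le_tsum (fun k => ?_) ((summable_nat_add_iff N).2 hs) hgs2.summable
  refine (hle (k + N)).trans (le_of_eq ?_)
  rw [pow_add]; ring

theorem aux_digits (x : ℝ) (hx : x ∈ Set.Ico (0 : ℝ) 1) (N : ℕ) :
    ∑ k ∈ Finset.range N, ((⌊x * 3 ^ (k + 1)⌋₊ % 3 : ℕ) : ℝ) / 3 ^ (k + 1)
      = (⌊x * 3 ^ N⌋₊ : ℝ) / 3 ^ N := by
  induction N with
  | zero =>
    have : ⌊x⌋₊ = 0 := Nat.floor_eq_zero.2 hx.2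
    simp [this]
  | succ n ih =>
    rw [Finset.sum_range_succ, ih]
    have h1 : ⌊x * 3 ^ n⌋₊ = ⌊x * 3 ^ (n + 1)⌋₊ / 3 := by
      rw [← Nat.floor_div_ofNat]
      congr 1
      rw [pow_succ]; ring
    have h2 := Nat.div_add_mod ⌊x * 3 ^ (n + 1)⌋₊ 3
    rw [← h1] at h2
    have h3 : (3 : ℝ) * ⌊x * 3 ^ n⌋₊ + ((⌊x * 3 ^ (n + 1)⌋₊ % 3 : ℕ) : ℝ)
      = (⌊x * 3 ^ (n + 1)⌋₊ : ℝ) := by exact_mod_cast h2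
    rw [← h3, pow_succ]
    field_simp

theorem aux_mem (a : ℕ → ℕ) (ha : ∀ n, a n < 3) (N : ℕ) (h : ∀ k, N ≤ k → a k = k % 2) :
    val3 a ∈ Mset 0 := by
  refine ⟨a, ha, rfl, 1 / 2, ?_, ?_⟩
  · apply aux_cesaro (fun k => (a k : ℝ)) (fun k => - ((k % 2 : ℕ) : ℝ) / 2) N 1
    · intro k
      rcases Nat.mod_two_eq_zero_or_one k with h | h <;> simp only [h] <;> norm_num [abs_le]
    · intro k hk
      simp only [h k hk]
      rcases Nat.mod_two_eq_zero_or_one k with h | h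
      · have h' : (k + 1) % 2 = 1 := by omega
        simp only [h, h']; norm_num
      · have h' : (k + 1) % 2 = 0 := by omega
        simp only [h, h']; norm_num
  · simp only [Finset.card_filter, Nat.cast_sum]
    apply aux_cesaro (fun k => ((if a k = 0 then 1 else 0 : ℕ) : ℝ))
      (fun k => ((k % 2 : ℕ) : ℝ) / 2) N 1
    · intro k
      rcases Nat.mod_two_eq_zero_or_one k with h | h <;> simp only [h] <;> norm_num [abs_le]
    · intro k hk
      simp only [h k hk]
      rcases Nat.mod_two_eq_zero_or_one k with h | h
      · have h' : (k + 1) % 2 = 1 := by omega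
        simp only [h, h']; norm_num
      · have h' : (k + 1) % 2 = 0 := by omega
        simp only [h, h']; norm_num

/-- The set `M₀` is dense in the interval `[0,1]`. -/
theorem Mset_zero_dense_in_Icc :
    Set.Icc (0 : ℝ) 1 ⊆ closure (Mset 0) := by
  rw [← closure_Ico (zero_ne_one (α := ℝ))]
  refine closure_minimal ?_ isClosed_closure
  intro x hx
  rw [Metric.mem_closure_iff]
  intro ε hε
  obtain ⟨N, hN⟩ := exists_pow_lt_of_lt_one (half_pos hε) (by norm_num : (1 / 3 : ℝ) < 1)
  let a : ℕ → ℕ := fun k => if k < N then ⌊x * 3 ^ (k + 1)⌋₊ % 3 else k % 2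
  have ha : ∀ n, a n < 3 := by
    intro n
    simp only [a]
    split_ifs <;> omega
  refine ⟨val3 a, aux_mem a ha N ?_, ?_⟩
  · intro k hk
    simp only [a, if_neg (not_lt.2 hk)]
  have h1 := aux_val a ha N
  have h2 : ∑ k ∈ Finset.range N, (a k : ℝ) / 3 ^ (k + 1) = (⌊x * 3 ^ N⌋₊ : ℝ) / 3 ^ N := by
    rw [← aux_digits x hx N]
    refine Finset.sum_congr rfl fun k hk => ?_
    simp only [a, if_pos (Finset.mem_range.1 hk)]
  rw [h2] at h1
  have hp : (0 : ℝ) < 3 ^ N := by positivity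
  have h3 : (⌊x * 3 ^ N⌋₊ : ℝ) / 3 ^ N ≤ x := by
    rw [div_le_iff₀ hp]
    exact Nat.floor_le (mul_nonneg hx.1 hp.le)
  have h4 : x ≤ (⌊x * 3 ^ N⌋₊ : ℝ) / 3 ^ N + (1 / 3) ^ N := by
    rw [one_div_pow, ← add_div, le_div_iff₀ hp]
    exact (Nat.lt_floor_add_one _).le
  rw [Real.dist_eq, abs_lt]
  rw [abs_le] at h1
  constructor <;> linarith [h1.1, h1.2]
end

section
/- The set M_0 has Lebesgue measure zero. -/
open Filter

open scoped Pointwise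

def w3 (d : ℕ) : ℤ := (d : ℤ) - if d = 0 then 1 else 0

def E3 (n : ℕ) (c : ℤ) : Set ℝ :=
  {x | ∃ a : ℕ → ℕ, (∀ n, a n < 3) ∧ x = val3 a ∧ ∑ k ∈ Finset.range n, w3 (a k) ≤ c}

lemma val3_summable (a : ℕ → ℕ) (ha : ∀ n, a n < 3) :
    Summable (fun k : ℕ => (a k : ℝ) / 3 ^ (k + 1)) := by
  have hs : Summable (fun k : ℕ => (1 / 3 : ℝ) ^ k) :=
    summable_geometric_of_lt_one (by norm_num) (by norm_num)
  refine Summable.of_nonneg_of_le (fun k => by positivity) (fun k => ?_) hs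
  have h : (a k : ℝ) ≤ 3 := by exact_mod_cast (ha k).le
  rw [one_div, inv_pow, ← one_div, div_le_div_iff₀ (by positivity) (by positivity), pow_succ]
  nlinarith [pow_pos (show (0 : ℝ) < 3 by norm_num) k]

lemma val3_shift (a : ℕ → ℕ) (ha : ∀ n, a n < 3) :
    val3 a = (a 0 : ℝ) / 3 + (1 / 3) * val3 (fun k => a (k + 1)) := by
  unfold val3
  rw [(val3_summable a ha).tsum_eq_zero_add, ← tsum_mul_left]
  congr 1
  · simp
  · refine tsum_congr fun k => ?_
    rw [pow_succ _ (k + 1)]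
    field_simp

lemma val3_mem (a : ℕ → ℕ) (ha : ∀ n, a n < 3) : val3 a ∈ Set.Icc (0 : ℝ) 1 := by
  constructor
  · exact tsum_nonneg fun k => by positivity
  · have hs : HasSum (fun k : ℕ => (2 / 3 : ℝ) * (1 / 3 : ℝ) ^ k) 1 := by
      have := (hasSum_geometric_of_lt_one (r := (1 / 3 : ℝ)) (by norm_num) (by norm_num)).mul_left
        (2 / 3)
      have e : (2 / 3 : ℝ) * (1 - 1 / 3)⁻¹ = 1 := by norm_num
      rwa [e] at this
    rw [← hs.tsum_eq]
    refine (val3_summable a ha).tsum_le_tsum (fun k => ?_) hs.summable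
    have h : (a k : ℝ) ≤ 2 := by exact_mod_cast Nat.le_of_lt_succ (ha k)
    rw [one_div, inv_pow, pow_succ, div_le_iff₀ (by positivity)]
    have : (2 / 3 : ℝ) * (3 ^ k)⁻¹ * (3 ^ k * 3) = 2 := by field_simp
    rw [this]; exact h

lemma E3_succ (n : ℕ) (c : ℤ) :
    E3 (n + 1) c ⊆ ⋃ d ∈ Finset.range 3,
      (fun x : ℝ => (d : ℝ) / 3 + x) '' ((1 / 3 : ℝ) • E3 n (c - w3 d)) := by
  rintro x ⟨a, ha, rfl, hc⟩
  simp only [Set.mem_iUnion]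
  refine ⟨a 0, Finset.mem_range.2 (ha 0), (1 / 3 : ℝ) * val3 (fun k => a (k + 1)), ?_,
    (val3_shift a ha).symm⟩
  refine ⟨_, ⟨fun k => a (k + 1), fun k => ha _, rfl, ?_⟩, rfl⟩
  rw [Finset.sum_range_succ'] at hc
  linarith

lemma E3_vol (n : ℕ) : ∀ c : ℤ,
    MeasureTheory.volume (E3 n c) ≤ ENNReal.ofReal ((11 / 12 : ℝ) ^ n * (2 : ℝ) ^ c) := by
  induction n with
  | zero =>
    intro c
    by_cases hc : 0 ≤ c
    · have h1 : E3 0 c ⊆ Set.Icc (0 : ℝ) 1 := by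
        rintro x ⟨a, ha, rfl, -⟩; exact val3_mem a ha
      refine (MeasureTheory.measure_mono h1).trans ?_
      rw [Real.volume_Icc]
      apply ENNReal.ofReal_le_ofReal
      have := one_le_zpow₀ (show (1 : ℝ) ≤ 2 by norm_num) hc
      simpa using this
    · have : E3 0 c = ∅ := by
        ext x
        simp only [Set.mem_empty_iff_false, iff_false]
        rintro ⟨a, ha, rfl, h⟩
        simp at h
        exact hc h
      simp [this]
  | succ n ih =>
    intro c
    refine (MeasureTheory.measure_mono (E3_succ n c)).trans ?_
    refine (MeasureTheory.measure_biUnion_finset_le _ _).trans ?_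
    have key : ∀ d : ℕ, MeasureTheory.volume
        ((fun x : ℝ => (d : ℝ) / 3 + x) '' ((1 / 3 : ℝ) • E3 n (c - w3 d))) ≤
        ENNReal.ofReal ((1 / 3) * ((11 / 12 : ℝ) ^ n * (2 : ℝ) ^ (c - w3 d))) := by
      intro d
      rw [Set.image_add_left, MeasureTheory.measure_preimage_add,
        MeasureTheory.Measure.addHaar_smul, ENNReal.ofReal_mul (by norm_num)]
      gcongr
      · simp [abs_of_pos]
      · exact ih _
    refine (Finset.sum_le_sum fun d _ => key d).trans ?_
    rw [← ENNReal.ofReal_sum_of_nonneg (fun d _ => by positivity)]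
    apply ENNReal.ofReal_le_ofReal
    apply le_of_eq
    simp only [Finset.sum_range_succ, Finset.sum_range_zero, w3]
    norm_num
    rw [zpow_add₀ (by norm_num), zpow_sub₀ (by norm_num), zpow_sub₀ (by norm_num), pow_succ]
    norm_num
    ring

theorem Mset_zero_measure_zero :
    MeasureTheory.volume (Mset 0) = 0 := by
  have hsub : Mset 0 ⊆ ⋃ N : ℕ, ⋂ m ≥ N, E3 (10 * m) m := by
    rintro x ⟨a, ha, rfl, L, h1, h2⟩
    have h3 := h1.sub h2
    rw [sub_self] at h3
    have h4 := h3.eventually (gt_mem_nhds (show (0 : ℝ) < 1 / 10 by norm_num))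
    obtain ⟨N, hN⟩ := Filter.eventually_atTop.1 h4
    simp only [Set.mem_iUnion, Set.mem_iInter]
    refine ⟨N + 1, fun m hm => ⟨a, ha, rfl, ?_⟩⟩
    have h5 := hN (10 * m) (by omega)
    have hm0 : (0 : ℝ) < m := by exact_mod_cast (by omega : 0 < m)
    rw [← sub_div, div_lt_iff₀ (by push_cast; positivity)] at h5
    have h6 : ((∑ k ∈ Finset.range (10 * m), w3 (a k) : ℤ) : ℝ) =
        ∑ k ∈ Finset.range (10 * m), (a k : ℝ) -
        (((Finset.range (10 * m)).filter (fun j => a j = 0)).card : ℝ) := by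
      simp [w3, Finset.sum_sub_distrib]
    have h7 : ((∑ k ∈ Finset.range (10 * m), w3 (a k) : ℤ) : ℝ) ≤ ((m : ℤ) : ℝ) := by
      rw [h6]; push_cast at h5 ⊢; linarith
    exact_mod_cast h7
  refine MeasureTheory.measure_mono_null hsub ?_
  refine MeasureTheory.measure_iUnion_null fun N => ?_
  have hlim : Filter.Tendsto (fun m : ℕ => ENNReal.ofReal ((2 * (11 / 12 : ℝ) ^ 10) ^ m))
      Filter.atTop (nhds 0) := by
    rw [← ENNReal.ofReal_zero]
    exact ENNReal.tendsto_ofReal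
      (tendsto_pow_atTop_nhds_zero_of_lt_one (by norm_num) (by norm_num))
  refine le_antisymm (ge_of_tendsto hlim ?_) bot_le
  filter_upwards [Filter.eventually_ge_atTop N] with m hm
  refine (MeasureTheory.measure_mono (Set.biInter_subset_of_mem (show m ∈ {m | m ≥ N} from hm))).trans ?_
  refine (E3_vol _ _).trans (le_of_eq ?_)
  rw [mul_pow, pow_mul, zpow_natCast, mul_comm]
end

section
/- The Hausdorff–Besicovitch dimension of the set M_0 is at least 0.87, i.e. dimH(M_0) ≥ 0.87. -/
open Filter

open MeasureTheory ProbabilityTheory Topology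

namespace M0

/-- weights -/
noncomputable def q : Fin 3 → ℝ := ![29/50, 13/50, 8/50]

lemma q_pos (j : Fin 3) : 0 < q j := by
  fin_cases j <;> norm_num [q]

/-- one-digit law -/
noncomputable def m : Measure (Fin 3) := ∑ j, ENNReal.ofReal (q j) • Measure.dirac j

lemma m_singleton (j : Fin 3) : m {j} = ENNReal.ofReal (q j) := by
  simp only [m, Measure.coe_finsetSum, Finset.sum_apply, Measure.smul_apply, smul_eq_mul]
  rw [Finset.sum_eq_single j]
  · simp
  · intro b _ hb
    simp [hb]
  · simp

instance : IsProbabilityMeasure m := by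
  constructor
  simp only [m, Measure.coe_finsetSum, Finset.sum_apply, Measure.smul_apply, smul_eq_mul,
    measure_univ, mul_one]
  rw [← ENNReal.ofReal_sum_of_nonneg (fun j _ => (q_pos j).le)]
  simp only [Fin.sum_univ_three, q, Matrix.cons_val_zero, Matrix.cons_val_one, Matrix.cons_val]
  norm_num

lemma integral_m (f : Fin 3 → ℝ) : ∫ x, f x ∂m = ∑ j, q j * f j := by
  rw [integral_fintype (Integrable.of_finite)]
  refine Finset.sum_congr rfl fun j _ => ?_
  rw [measureReal_def, m_singleton, ENNReal.toReal_ofReal (q_pos j).le, smul_eq_mul]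

/-- product law -/
noncomputable def μ : Measure (ℕ → Fin 3) := Measure.infinitePi (fun _ : ℕ => m)

instance : IsProbabilityMeasure μ := by unfold μ; infer_instance

lemma slln (f : Fin 3 → ℝ) :
    ∀ᵐ ω ∂μ, Tendsto (fun n : ℕ => (∑ i ∈ Finset.range n, f (ω i)) / n) atTop
      (𝓝 (∑ j, q j * f j)) := by
  have hf : Measurable f := measurable_of_finite f
  have mp : ∀ i : ℕ, MeasurePreserving (fun ω : ℕ → Fin 3 => ω i) μ m := fun i =>
    measurePreserving_eval_infinitePi (fun _ : ℕ => m) i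
  have h := strong_law_ae_real (μ := μ) (fun i ω => f (ω i)) ?_ ?_ ?_
  · have e : ∫ ω, f (ω 0) ∂μ = ∑ j, q j * f j := by
      rw [← integral_m, ← (mp 0).map_eq, integral_map (mp 0).measurable.aemeasurable
        hf.aestronglyMeasurable]
    rw [e] at h
    exact h
  · exact (mp 0).integrable_comp_of_integrable (g := f) Integrable.of_finite
  · intro i j hij
    exact (iIndepFun_infinitePi (P := fun _ : ℕ => m) (X := fun _ => f) (fun _ => hf)).indepFun hij
  · intro i
    refine ⟨(hf.comp (mp i).measurable).aemeasurable, (hf.comp (mp 0).measurable).aemeasurable, ?_⟩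
    change Measure.map (f ∘ (fun ω => ω i)) μ = Measure.map (f ∘ (fun ω => ω 0)) μ
    rw [← Measure.map_map hf (mp i).measurable, ← Measure.map_map hf (mp 0).measurable,
      (mp i).map_eq, (mp 0).map_eq]

lemma entropy : ∑ j, q j * Real.log (q j) < -(0.872 * Real.log 3) := by
  have h : ((29/50 : ℝ)^145 * (13/50)^65 * (8/50)^40) * 3^218 < 1 := by norm_num
  have h2 := Real.log_lt_log (by positivity) h
  rw [Real.log_mul (by positivity) (by positivity), Real.log_mul (by positivity) (by positivity),
    Real.log_mul (by positivity) (by positivity), Real.log_pow, Real.log_pow, Real.log_pow,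
    Real.log_pow, Real.log_one] at h2
  simp only [Fin.sum_univ_three, q, Matrix.cons_val_zero, Matrix.cons_val_one, Matrix.cons_val]
  push_cast at h2
  linarith

/-- prefix integer -/
def P (a : ℕ → ℕ) : ℕ → ℕ
  | 0 => 0
  | n + 1 => 3 * P a n + a n

lemma P_inj {a b : ℕ → ℕ} (ha : ∀ n, a n < 3) (hb : ∀ n, b n < 3) :
    ∀ n, P a n = P b n → ∀ i < n, a i = b i
  | 0, _, i, hi => by omega
  | n + 1, h, i, hi => by
    simp only [P] at h
    have h1 := ha n
    have h2 := hb n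
    rcases Nat.lt_succ_iff_lt_or_eq.1 hi with h3 | h3
    · exact P_inj ha hb n (by omega) i h3
    · subst h3; omega

lemma summ_bd : Summable (fun k : ℕ => (2 : ℝ) / 3 ^ (k + 1)) := by
  have : (fun k : ℕ => (2 : ℝ) / 3 ^ (k + 1)) = fun k => (2/3) * (1/3 : ℝ)^k := by
    funext k; rw [pow_succ, one_div_pow]; field_simp
  rw [this]
  exact (summable_geometric_of_lt_one (by norm_num) (by norm_num)).mul_left _

lemma tsum_bd : ∑' k : ℕ, (2 : ℝ) / 3 ^ (k + 1) = 1 := by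
  have : (fun k : ℕ => (2 : ℝ) / 3 ^ (k + 1)) = fun k => (2/3) * (1/3 : ℝ)^k := by
    funext k; rw [pow_succ, one_div_pow]; field_simp
  rw [this, tsum_mul_left, tsum_geometric_of_lt_one (by norm_num) (by norm_num)]
  norm_num

lemma term_le {a : ℕ → ℕ} (ha : ∀ n, a n < 3) (k : ℕ) :
    (a k : ℝ) / 3 ^ (k + 1) ≤ 2 / 3 ^ (k + 1) := by
  have : (a k : ℝ) ≤ 2 := by exact_mod_cast Nat.lt_succ_iff.1 (ha k)
  gcongr

lemma summ {a : ℕ → ℕ} (ha : ∀ n, a n < 3) : Summable (fun k => (a k : ℝ) / 3 ^ (k + 1)) :=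
  Summable.of_nonneg_of_le (fun k => by positivity) (term_le ha) summ_bd

lemma val_nonneg (a : ℕ → ℕ) : 0 ≤ val3 a := tsum_nonneg fun k => by positivity

lemma val_le {a : ℕ → ℕ} (ha : ∀ n, a n < 3) : val3 a ≤ 1 := by
  rw [← tsum_bd]
  exact (summ ha).tsum_le_tsum (term_le ha) summ_bd

lemma val_split {a : ℕ → ℕ} (ha : ∀ n, a n < 3) (n : ℕ) :
    val3 a * 3 ^ n = P a n + val3 (fun k => a (k + n)) := by
  have h1 : (∑ k ∈ Finset.range n, (a k : ℝ) / 3 ^ (k + 1)) * 3 ^ n = P a n := by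
    induction n with
    | zero => simp [P]
    | succ n ih =>
      rw [Finset.sum_range_succ, add_mul, pow_succ, ← mul_assoc, ih]
      simp only [P]; push_cast
      field_simp
  rw [val3, ← (summ ha).sum_add_tsum_nat_add n, add_mul, h1, ← tsum_mul_right, val3]
  congr 2
  funext k
  rw [show k + n + 1 = (k + 1) + n by ring, pow_add]
  field_simp

/-- digits as naturals -/
def dg (ω : ℕ → Fin 3) : ℕ → ℕ := fun n => (ω n : ℕ)

lemma dg_lt (ω : ℕ → Fin 3) (n : ℕ) : dg ω n < 3 := (ω n).2

/-- value map -/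
noncomputable def V (ω : ℕ → Fin 3) : ℝ := val3 (dg ω)

lemma V_meas : Measurable V := by
  apply Continuous.measurable
  unfold V val3
  refine continuous_tsum (u := fun k : ℕ => (2 : ℝ) / 3 ^ (k + 1)) ?_ summ_bd ?_
  · intro i
    have : Continuous (fun x : Fin 3 => ((x : ℕ) : ℝ) / 3 ^ (i + 1)) := continuous_of_discreteTopology
    exact this.comp (continuous_apply i)
  · intro n ω
    rw [Real.norm_of_nonneg (by positivity)]
    exact term_le (dg_lt ω) n

lemma P_close {ω ω' : ℕ → Fin 3} {n : ℕ} (h : |V ω' - V ω| ≤ (1/3 : ℝ)^n) :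
    P (dg ω') n ≤ P (dg ω) n + 2 := by
  have h1 := val_split (dg_lt ω) n
  have h2 := val_split (dg_lt ω') n
  have h3 := val_le (a := fun k => dg ω (k + n)) (fun k => dg_lt ω _)
  have h4 := val_nonneg (fun k => dg ω' (k + n))
  have h5 : (V ω' - V ω) * 3 ^ n ≤ 1 := by
    calc (V ω' - V ω) * 3 ^ n ≤ (1/3 : ℝ)^n * 3 ^ n := by
          gcongr; exact (le_abs_self _).trans h
      _ = 1 := by rw [← mul_pow]; norm_num
  unfold V at h5
  have h6 : (P (dg ω') n : ℝ) ≤ P (dg ω) n + 2 := by linarith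
  exact_mod_cast h6

/-- good sequences with a uniform bound from k on -/
def E (k : ℕ) : Set (ℕ → Fin 3) :=
  {ω | V ω ∈ Mset 0 ∧ ∀ n ≥ k, ∏ i ∈ Finset.range n, q (ω i) ≤ (3 : ℝ) ^ (-(0.872 * (n : ℝ)))}

lemma E_cyl {k n : ℕ} (hn : k ≤ n) (c : ℕ) :
    μ ({ω | P (dg ω) n = c} ∩ E k) ≤ ENNReal.ofReal ((3 : ℝ) ^ (-(0.872 * (n : ℝ)))) := by
  rcases ({ω | P (dg ω) n = c} ∩ E k).eq_empty_or_nonempty with h | ⟨w, hw, hE⟩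
  · rw [h]; simp
  · have hs : {ω | P (dg ω) n = c} ∩ E k ⊆ Set.pi (Finset.range n : Set ℕ) (fun i => {w i}) := by
      rintro ω ⟨h1, -⟩ i hi
      have := P_inj (dg_lt ω) (dg_lt w) n (h1.trans hw.symm) i (by simpa using hi)
      exact Fin.ext this
    refine (measure_mono hs).trans ?_
    rw [μ, Measure.infinitePi_pi _ (fun i _ => measurableSet_singleton _)]
    simp_rw [m_singleton]
    rw [← ENNReal.ofReal_prod_of_nonneg (fun i _ => (q_pos _).le)]
    exact ENNReal.ofReal_le_ofReal (hE.2 n hn)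

lemma E_set {k n : ℕ} (hn : k ≤ n) (s : Set ℝ)
    (hs : Metric.ediam s ≤ ENNReal.ofReal ((1/3 : ℝ)^n)) :
    μ (V ⁻¹' s ∩ E k) ≤ 3 * ENNReal.ofReal ((3 : ℝ) ^ (-(0.872 * (n : ℝ)))) := by
  classical
  rcases (V ⁻¹' s).eq_empty_or_nonempty with h | h
  · rw [h]; simp
  have hex : ∃ c, ∃ ω ∈ V ⁻¹' s, P (dg ω) n = c := by
    obtain ⟨w, hw⟩ := h; exact ⟨_, w, hw, rfl⟩
  obtain ⟨w, hw, hc⟩ := Nat.find_spec hex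
  have hmin : ∀ ω ∈ V ⁻¹' s, Nat.find hex ≤ P (dg ω) n := fun ω hω =>
    Nat.find_min' hex ⟨ω, hω, rfl⟩
  set c := Nat.find hex
  have hsub : V ⁻¹' s ∩ E k ⊆ ⋃ j ∈ Finset.range 3, ({ω | P (dg ω) n = c + j} ∩ E k) := by
    rintro ω ⟨h1, h2⟩
    have h3 := hmin ω h1
    have h4 : P (dg ω) n ≤ P (dg w) n + 2 := by
      apply P_close
      have h5 := (Metric.edist_le_ediam_of_mem (s := s) (x := V ω) (y := V w) h1 hw).trans hs
      rw [edist_dist] at h5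
      exact (ENNReal.ofReal_le_ofReal_iff (by positivity)).1 h5
    simp only [Set.mem_iUnion]
    exact ⟨P (dg ω) n - c, by simp; omega, by simp; omega, h2⟩
  refine (measure_mono hsub).trans ((measure_biUnion_finset_le _ _).trans ?_)
  refine (Finset.sum_le_sum fun j _ => E_cyl hn _).trans ?_
  simp

lemma E_set' {k n : ℕ} (hn : k ≤ n) (hn' : 935 ≤ n) (s : Set ℝ)
    (hs : Metric.ediam s ≤ ENNReal.ofReal ((1/3 : ℝ)^n)) :
    (μ.restrict (E k)).map V s ≤ ENNReal.ofReal (((1/3 : ℝ) ^ (n + 1)) ^ (0.87 : ℝ)) := by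
  refine (measure_mono subset_closure).trans ?_
  rw [Measure.map_apply V_meas isClosed_closure.measurableSet,
    Measure.restrict_apply (V_meas isClosed_closure.measurableSet)]
  refine (E_set hn _ (by rwa [Metric.ediam_closure])).trans ?_
  rw [show (3 : ENNReal) = ENNReal.ofReal 3 by simp, ← ENNReal.ofReal_mul (by norm_num)]
  apply ENNReal.ofReal_le_ofReal
  have e : ((1/3 : ℝ) ^ (n + 1)) ^ (0.87 : ℝ) = (3 : ℝ) ^ (-(0.87 * ((n : ℝ) + 1))) := by
    rw [one_div, inv_pow, Real.inv_rpow (by positivity), ← Real.rpow_natCast,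
      ← Real.rpow_mul (by norm_num), ← Real.rpow_neg (by norm_num)]
    push_cast; ring_nf
  rw [e]
  nth_rewrite 1 [← Real.rpow_one 3]
  rw [← Real.rpow_add (by norm_num)]
  apply Real.rpow_le_rpow_of_exponent_le (by norm_num)
  have : (935 : ℝ) ≤ n := by exact_mod_cast hn'
  linarith

lemma frostman (k : ℕ) : (μ.restrict (E k)).map V ≤ Measure.hausdorffMeasure (0.87 : ℝ) := by
  set K := max k 935
  refine Measure.le_hausdorffMeasure _ _ (ENNReal.ofReal ((1/3 : ℝ)^K))
    (ENNReal.ofReal_pos.2 (by positivity)) ?_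
  intro s hs
  rcases eq_or_ne (Metric.ediam s) 0 with h0 | h0
  · rw [h0, ENNReal.zero_rpow_of_pos (by norm_num)]
    have ht : Tendsto (fun n : ℕ => ENNReal.ofReal (((1/3 : ℝ) ^ (n + 1)) ^ (0.87 : ℝ))) atTop
        (𝓝 0) := by
      have h1 : Tendsto (fun n : ℕ => (1/3 : ℝ) ^ (n + 1)) atTop (𝓝 0) :=
        (tendsto_add_atTop_iff_nat 1).2
          (tendsto_pow_atTop_nhds_zero_of_lt_one (by norm_num) (by norm_num))
      have h2 := h1.rpow_const (p := (0.87 : ℝ)) (Or.inr (by norm_num))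
      rw [Real.zero_rpow (by norm_num)] at h2
      simpa using ENNReal.tendsto_ofReal h2
    refine ge_of_tendsto ht ?_
    filter_upwards [eventually_ge_atTop K] with n hn
    exact E_set' ((le_max_left _ _).trans hn) ((le_max_right _ _).trans hn) s (by rw [h0]; simp)
  · have hfin : Metric.ediam s ≠ ⊤ := ne_top_of_le_ne_top ENNReal.ofReal_ne_top hs
    have hpos := ENNReal.toReal_pos h0 hfin
    have hx := ENNReal.ofReal_toReal hfin
    set x := (Metric.ediam s).toReal
    rw [← hx] at hs ⊢
    have hsK := (ENNReal.ofReal_le_ofReal_iff (by positivity)).1 hs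
    obtain ⟨n, h1, h2⟩ := exists_nat_pow_near_of_lt_one (y := (1/3 : ℝ)) hpos
      (hsK.trans (pow_le_one₀ (by norm_num) (by norm_num))) (by norm_num) (by norm_num)
    have hn : K ≤ n := by
      have := (pow_lt_pow_iff_right_of_lt_one₀ (by norm_num) (by norm_num)).1 (h1.trans_le hsK)
      omega
    refine (E_set' ((le_max_left _ _).trans hn) ((le_max_right _ _).trans hn) s ?_).trans ?_
    · rw [← hx]; exact ENNReal.ofReal_le_ofReal h2
    · rw [ENNReal.ofReal_rpow_of_pos hpos]
      apply ENNReal.ofReal_le_ofReal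
      exact Real.rpow_le_rpow (by positivity) h1.le (by norm_num)

lemma ae_E : ∀ᵐ ω ∂μ, ω ∈ ⋃ k, E k := by
  filter_upwards [slln (fun j => ((j : ℕ) : ℝ)), slln (fun j => if (j : ℕ) = 0 then 1 else 0),
    slln (fun j => Real.log (q j))] with ω h1 h2 h3
  have hM : V ω ∈ Mset 0 := by
    refine ⟨dg ω, dg_lt ω, rfl, 29/50, ?_, ?_⟩
    · convert h1 using 2
      · rfl
      · simp only [Fin.sum_univ_three, q, Matrix.cons_val_zero, Matrix.cons_val_one, Matrix.cons_val]
        norm_num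
    · convert h2 using 2
      · simp [dg]
      · norm_num [Fin.sum_univ_three, q]
  have h4 := h3.eventually (gt_mem_nhds entropy)
  obtain ⟨k, hk⟩ := eventually_atTop.1 (h4.and (eventually_gt_atTop 0))
  refine Set.mem_iUnion.2 ⟨k, hM, fun n hn => ?_⟩
  obtain ⟨h5, h6⟩ := hk n hn
  have h6' : (0 : ℝ) < n := by exact_mod_cast h6
  rw [div_lt_iff₀ h6'] at h5
  rw [← Real.log_le_log_iff (Finset.prod_pos fun i _ => q_pos _) (by positivity),
    Real.log_prod (fun i _ => (q_pos _).ne'), Real.log_rpow (by norm_num)]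
  linarith

end M0

/-- The Hausdorff–Besicovitch dimension of `M₀` is at least `0.87`. -/
theorem Mset_zero_dimH_ge :
    ENNReal.ofReal 0.87 ≤ dimH (Mset 0) := by
  have h1 : M0.μ (⋃ k, M0.E k) ≠ 0 := by
    intro h0
    have h2 : M0.μ (⋃ k, M0.E k)ᶜ = 0 := M0.ae_E
    have h3 := measure_univ_le_add_compl (μ := M0.μ) (⋃ k, M0.E k)
    rw [h0, h2, measure_univ] at h3
    simp at h3
  obtain ⟨k, hk⟩ := exists_measure_pos_of_not_measure_iUnion_null h1
  have h2 : M0.μ (M0.E k) ≤ Measure.hausdorffMeasure (0.87 : ℝ) (Mset 0) := by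
    calc M0.μ (M0.E k) = (M0.μ.restrict (M0.E k)) (M0.E k) :=
          (Measure.restrict_eq_self _ subset_rfl).symm
      _ ≤ (M0.μ.restrict (M0.E k)) (M0.V ⁻¹' (Mset 0)) := measure_mono fun ω h => h.1
      _ ≤ _ := Measure.le_map_apply M0.V_meas.aemeasurable _
      _ ≤ _ := M0.frostman k _
  have h3 := le_dimH_of_hausdorffMeasure_ne_zero (d := Real.toNNReal 0.87) (s := Mset 0) (by
    rw [Real.coe_toNNReal _ (by norm_num)]
    exact (hk.trans_le h2).ne')
  exact h3
end

section
/- The set M_0 has the cardinality of the continuum. -/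
open Filter

/-- binary digit sequence -/
def dig (b : ℕ → Bool) (n : ℕ) : Bool := if n % 2 = 0 then b (n / 2) else !b (n / 2)

theorem dig_inj : Function.Injective dig := by
  intro b c h
  funext k
  have := congrFun h (2 * k)
  simpa [dig] using this

/-- digits as naturals -/
def digN (b : ℕ → Bool) (n : ℕ) : ℕ := cond (dig b n) 1 0

theorem digN_lt (b : ℕ → Bool) (n : ℕ) : digN b n < 2 := by
  unfold digN; cases dig b n <;> simp

theorem digN_val (b : ℕ → Bool) :
    val3 (digN b) = (1 / 3) * Cardinal.cantorFunction (1 / 3) (dig b) := by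
  unfold val3 Cardinal.cantorFunction
  rw [← tsum_mul_left]
  congr 1
  funext k
  unfold digN Cardinal.cantorFunctionAux
  cases dig b k
  · simp
  · simp [pow_succ]

theorem digN_sum_even (b : ℕ → Bool) (k : ℕ) :
    ∑ j ∈ Finset.range (2 * k), digN b j = k := by
  induction k with
  | zero => simp
  | succ k ih =>
    rw [show 2 * (k + 1) = 2 * k + 1 + 1 by ring, Finset.sum_range_succ, Finset.sum_range_succ, ih]
    have h1 : (2 * k + 1) / 2 = k := by omega
    have h2 : (2 * k + 1) % 2 = 1 := by omega
    have h3 : 2 * k / 2 = k := by omega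
    have h4 : 2 * k % 2 = 0 := by omega
    simp only [digN, dig, h1, h2, h3, h4]
    cases b k <;> simp

theorem digN_sum (b : ℕ → Bool) (n : ℕ) :
    n ≤ 2 * (∑ j ∈ Finset.range n, digN b j) + 1 ∧
    2 * (∑ j ∈ Finset.range n, digN b j) ≤ n + 1 := by
  rcases Nat.even_or_odd' n with ⟨k, rfl | rfl⟩
  · rw [digN_sum_even]; omega
  · rw [Finset.sum_range_succ, digN_sum_even]
    have := digN_lt b (2 * k)
    omega

theorem digN_card (b : ℕ → Bool) (n : ℕ) :
    ((Finset.range n).filter (fun j => digN b j = 0)).card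
      + ∑ j ∈ Finset.range n, digN b j = n := by
  rw [Finset.card_filter, ← Finset.sum_add_distrib]
  conv_rhs => rw [← Finset.card_range n, Finset.card_eq_sum_ones]
  apply Finset.sum_congr rfl
  intro j _
  have := digN_lt b j
  split_ifs <;> omega

theorem tendsto_half (u : ℕ → ℕ) (h : ∀ n, n ≤ 2 * u n + 1 ∧ 2 * u n ≤ n + 1) :
    Tendsto (fun n => (u n : ℝ) / n) atTop (nhds (1 / 2)) := by
  have h0 : Tendsto (fun n : ℕ => (1 : ℝ) / n) atTop (nhds 0) := tendsto_one_div_atTop_nhds_zero_nat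
  have hl : Tendsto (fun n : ℕ => (1 / 2 : ℝ) - 1 / n) atTop (nhds (1 / 2)) := by
    simpa using h0.const_sub (1 / 2 : ℝ)
  have hu : Tendsto (fun n : ℕ => (1 / 2 : ℝ) + 1 / n) atTop (nhds (1 / 2)) := by
    simpa using h0.const_add (1 / 2 : ℝ)
  refine tendsto_of_tendsto_of_tendsto_of_le_of_le' hl hu ?_ ?_
  all_goals
    filter_upwards [eventually_gt_atTop 0] with n hn
    have hn' : (0 : ℝ) < n := by exact_mod_cast hn
    have h1 : (n : ℝ) ≤ 2 * u n + 1 := by exact_mod_cast (h n).1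
    have h2 : 2 * (u n : ℝ) ≤ n + 1 := by exact_mod_cast (h n).2
  · rw [le_div_iff₀ hn', sub_mul, one_div_mul_cancel hn'.ne']; linarith
  · rw [div_le_iff₀ hn', add_mul, one_div_mul_cancel hn'.ne']; linarith

theorem digN_mem (b : ℕ → Bool) : val3 (digN b) ∈ Mset 0 := by
  refine ⟨digN b, fun n => (digN_lt b n).trans (by norm_num), rfl, 1 / 2, ?_, ?_⟩
  · have := tendsto_half _ (digN_sum b)
    simpa only [Nat.cast_sum] using this
  · apply tendsto_half
    intro n
    have := digN_card b n
    have := digN_sum b n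
    omega

/-- The set `M₀` has the cardinality of the continuum. -/
theorem Mset_zero_cardinality_continuum :
    Cardinal.mk (Mset 0) = Cardinal.continuum := by
  apply le_antisymm
  · exact (Cardinal.mk_set_le _).trans Cardinal.mk_real.le
  · have hinj : Function.Injective (fun b : ℕ → Bool => (⟨val3 (digN b), digN_mem b⟩ : Mset 0)) := by
      intro b c h
      have h' : val3 (digN b) = val3 (digN c) := congrArg Subtype.val h
      rw [digN_val, digN_val] at h'
      have h3 := mul_left_cancel₀ (by norm_num) h'
      exact dig_inj (Cardinal.cantorFunction_injective (by norm_num) (by norm_num) h3)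
    have := Cardinal.mk_le_of_injective hinj
    simpa using this
end

section
/- The set M_1 is dense in [0,1], has Lebesgue measure zero, and its Hausdorff–Besicovitch dimension satisfies dimH(M_1) ≥ log 2 / log 3. -/
open Filter

open MeasureTheory

lemma mgf_bound {b : ℕ} (hb : 0 < b) (g : Fin b → ℝ) (hg : ∀ d, |g d| ≤ 1) (hs : ∑ d, g d = 0)
    (l : ℝ) (hl0 : 0 ≤ l) (hl : l ≤ 1) :
    ∑ d, Real.exp (l * g d) ≤ b * Real.exp (l ^ 2) := by
  have h1 : ∀ d, Real.exp (l * g d) ≤ 1 + l * g d + l ^ 2 := by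
    intro d
    have h2 := (abs_le.1 (hg d))
    have h0 : |l * g d| ≤ 1 := by
      rw [abs_mul, abs_of_nonneg hl0]; exact mul_le_one₀ hl (abs_nonneg _) (hg d)
    have h3 := (abs_le.1 (Real.abs_exp_sub_one_sub_id_le h0)).2
    have h4 : (l * g d) ^ 2 ≤ l ^ 2 := by
      rw [mul_pow]
      have : g d ^ 2 ≤ 1 := by nlinarith
      nlinarith [sq_nonneg l]
    linarith
  calc ∑ d, Real.exp (l * g d) ≤ ∑ d, (1 + l * g d + l ^ 2) := Finset.sum_le_sum fun d _ => h1 d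
    _ = b * (1 + l ^ 2) := by
      rw [Finset.sum_add_distrib, Finset.sum_add_distrib, ← Finset.mul_sum, hs]
      simp; ring
    _ ≤ _ := by
      have := Real.add_one_le_exp (l ^ 2)
      gcongr; linarith

lemma vol_bound {b : ℕ} (hb : 0 < b) (g : Fin b → ℝ) (hg : ∀ d, |g d| ≤ 1)
    (hs : ∑ d, g d = 0) (e : ℝ) (he0 : 0 < e) (he : e ≤ 1) (n : ℕ) :
    volume {x : ℝ | ∃ a : ℕ → Fin b, x = Real.ofDigits a ∧ e * n ≤ ∑ i ∈ Finset.range n, g (a i)}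
      ≤ ENNReal.ofReal (Real.exp (-(e ^ 2 / 4)) ^ n) := by
  classical
  let v : (Fin n → Fin b) → ℝ := fun w => ∑ i : Fin n, ((w i : ℕ) : ℝ) * ((b : ℝ) ^ ((i : ℕ) + 1))⁻¹
  let W : Finset (Fin n → Fin b) := Finset.univ.filter fun w => e * n ≤ ∑ i, g (w i)
  have hbR : (0 : ℝ) < b := by exact_mod_cast hb
  have hsub : {x : ℝ | ∃ a : ℕ → Fin b, x = Real.ofDigits a ∧
      e * n ≤ ∑ i ∈ Finset.range n, g (a i)} ⊆
      ⋃ w ∈ W, Set.Icc (v w) (v w + ((b : ℝ) ^ n)⁻¹) := by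
    rintro x ⟨a, rfl, h⟩
    refine Set.mem_iUnion₂.2 ⟨fun i => a i, ?_, ?_⟩
    · simp only [W, Finset.mem_filter, Finset.mem_univ, true_and]
      rwa [Fin.sum_univ_eq_sum_range (fun i => g (a i)) n]
    · have hv : v (fun i => a i) = ∑ i ∈ Finset.range n, Real.ofDigitsTerm a i :=
        Fin.sum_univ_eq_sum_range (fun i => Real.ofDigitsTerm a i) n
      rw [Real.ofDigits_eq_sum_add_ofDigits a n, hv]
      have h0 := Real.ofDigits_nonneg (fun i ↦ a (i + n))
      have h1 := Real.ofDigits_le_one (fun i ↦ a (i + n))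
      have hp : (0 : ℝ) < ((b : ℝ) ^ n)⁻¹ := by positivity
      constructor
      · nlinarith
      · nlinarith
  have hreal : (W.card : ℝ) * ((b : ℝ) ^ n)⁻¹ ≤ Real.exp (-(e ^ 2 / 4)) ^ n := by
    have hc : (W.card : ℝ) ≤ ∑ w : Fin n → Fin b, Real.exp (e / 2 * (∑ i, g (w i) - e * n)) := by
      calc (W.card : ℝ) = ∑ w ∈ W, (1 : ℝ) := by simp
        _ ≤ ∑ w ∈ W, Real.exp (e / 2 * (∑ i, g (w i) - e * n)) := by
          refine Finset.sum_le_sum fun w hw => ?_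
          have := (Finset.mem_filter.1 hw).2
          apply Real.one_le_exp
          apply mul_nonneg (by positivity)
          linarith
        _ ≤ _ := Finset.sum_le_sum_of_subset_of_nonneg (Finset.subset_univ _)
          fun _ _ _ => (Real.exp_pos _).le
    have hprod : ∑ w : Fin n → Fin b, Real.exp (e / 2 * (∑ i, g (w i) - e * n)) =
        (∑ d, Real.exp (e / 2 * g d)) ^ n * Real.exp (-(e ^ 2 / 2)) ^ n := by
      have : (∑ d, Real.exp (e / 2 * g d)) ^ n =
          ∑ w : Fin n → Fin b, ∏ i, Real.exp (e / 2 * g (w i)) := by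
        have h := Finset.prod_univ_sum (fun _ : Fin n => (Finset.univ : Finset (Fin b)))
          (fun _ d => Real.exp (e / 2 * g d))
        rw [Fintype.piFinset_univ] at h
        rw [← h]; simp
      rw [this, Finset.sum_mul]
      refine Finset.sum_congr rfl fun w _ => ?_
      rw [← Real.exp_sum, ← Real.exp_nat_mul, ← Real.exp_add, ← Finset.mul_sum]
      congr 1; ring
    have hm := mgf_bound hb g hg hs (e / 2) (by positivity) (by linarith)
    have hm0 : 0 ≤ ∑ d, Real.exp (e / 2 * g d) := Finset.sum_nonneg fun _ _ => (Real.exp_pos _).le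
    rw [← div_eq_mul_inv, div_le_iff₀ (by positivity)]
    calc (W.card : ℝ) ≤ _ := hc
      _ = _ := hprod
      _ ≤ (b * Real.exp ((e / 2) ^ 2)) ^ n * Real.exp (-(e ^ 2 / 2)) ^ n := by gcongr
      _ = _ := by
        rw [mul_pow, mul_assoc, ← mul_pow, ← Real.exp_add, mul_comm]
        congr 3; ring
  calc _ ≤ volume (⋃ w ∈ W, Set.Icc (v w) (v w + ((b : ℝ) ^ n)⁻¹)) := measure_mono hsub
    _ ≤ ∑ w ∈ W, volume (Set.Icc (v w) (v w + ((b : ℝ) ^ n)⁻¹)) := measure_biUnion_finset_le _ _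
    _ = ENNReal.ofReal ((W.card : ℝ) * ((b : ℝ) ^ n)⁻¹) := by
      simp only [Real.volume_Icc, add_sub_cancel_left, Finset.sum_const, nsmul_eq_mul]
      rw [ENNReal.ofReal_mul (by positivity), ENNReal.ofReal_natCast]
    _ ≤ _ := ENNReal.ofReal_le_ofReal hreal

lemma limsup_null {b : ℕ} (hb : 0 < b) (g : Fin b → ℝ) (hg : ∀ d, |g d| ≤ 1)
    (hs : ∑ d, g d = 0) (e : ℝ) (he0 : 0 < e) (he : e ≤ 1) :
    volume {x : ℝ | ∃ a : ℕ → Fin b, x = Real.ofDigits a ∧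
      ∃ᶠ n : ℕ in atTop, e * n ≤ ∑ i ∈ Finset.range n, g (a i)} = 0 := by
  have hlt : Real.exp (-(e ^ 2 / 4)) < 1 := by
    rw [Real.exp_lt_one_iff]; nlinarith
  have hsum : ∑' n : ℕ, volume {x : ℝ | ∃ a : ℕ → Fin b, x = Real.ofDigits a ∧
      e * n ≤ ∑ i ∈ Finset.range n, g (a i)} ≠ ⊤ := by
    refine ne_top_of_le_ne_top ?_ (ENNReal.tsum_le_tsum fun n => vol_bound hb g hg hs e he0 he n)
    rw [← ENNReal.ofReal_tsum_of_nonneg (fun n => by positivity)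
      (summable_geometric_of_lt_one (Real.exp_pos _).le hlt)]
    exact ENNReal.ofReal_ne_top
  refine measure_mono_null ?_ (measure_limsup_atTop_eq_zero hsum)
  rintro x ⟨a, hx, h⟩
  rw [Filter.limsup_eq_iInf_iSup_of_nat]
  simp only [Set.iInf_eq_iInter, Set.iSup_eq_iUnion, Set.mem_iInter, Set.mem_iUnion]
  intro m
  obtain ⟨n, hn, h'⟩ := (frequently_atTop.1 h) m
  exact ⟨n, hn, a, hx, h'⟩

lemma bad_null {b : ℕ} (hb : 0 < b) (g : Fin b → ℝ) (hg : ∀ d, |g d| ≤ 1)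
    (hs : ∑ d, g d = 0) :
    volume {x : ℝ | ∃ a : ℕ → Fin b, x = Real.ofDigits a ∧
      ¬ Tendsto (fun n : ℕ => (∑ i ∈ Finset.range n, g (a i)) / n) atTop (nhds 0)} = 0 := by
  have hpos : ∀ q : ℕ, (0 : ℝ) < 1 / ((q : ℝ) + 1) := fun q => Nat.one_div_pos_of_nat
  have hle : ∀ q : ℕ, 1 / ((q : ℝ) + 1) ≤ 1 := fun q => by
    rw [div_le_one (by positivity)]; linarith [(Nat.cast_nonneg q : (0 : ℝ) ≤ q)]
  refine measure_mono_null ?_ (measure_iUnion_null fun q : ℕ =>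
    measure_union_null (limsup_null hb g hg hs _ (hpos q) (hle q))
    (limsup_null hb (fun d => - g d) (by simpa using hg) (by simpa using hs) _ (hpos q) (hle q)))
  rintro x ⟨a, hx, h⟩
  by_contra hc
  apply h
  rw [Metric.tendsto_nhds]
  intro e he
  obtain ⟨q, hq⟩ := exists_nat_one_div_lt he
  simp only [Set.mem_iUnion, not_exists] at hc
  have hcq := hc q
  simp only [Set.mem_union, Set.mem_ofPred_eq, not_or, not_exists, not_and, not_frequently,
    not_le, Finset.sum_neg_distrib] at hcq
  filter_upwards [hcq.1 a hx, hcq.2 a hx, eventually_gt_atTop 0] with n h1 h2 h3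
  have hn : (0 : ℝ) < n := by exact_mod_cast h3
  rw [Real.dist_eq, sub_zero]
  refine lt_of_le_of_lt ?_ hq
  rw [abs_div, abs_of_pos hn, div_le_iff₀ hn, abs_le]
  constructor <;> linarith

lemma val3_fin (a : ℕ → Fin 3) : val3 (fun n => (a n : ℕ)) = Real.ofDigits a := by
  simp [val3, Real.ofDigits, Real.ofDigitsTerm, div_eq_mul_inv]

lemma Mset_null : volume (Mset 1) = 0 := by
  refine measure_mono_null ?_ (bad_null (b := 3) (by norm_num)
    (fun d => (((d : ℕ) : ℝ) - if (d : ℕ) = 1 then 1 else 0) / 2 - 1 / 3) ?_ ?_)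
  · rintro x ⟨a, ha, rfl, L, h1, h2⟩
    refine ⟨fun n => ⟨a n, ha n⟩, val3_fin (fun n => ⟨a n, ha n⟩), fun h => ?_⟩
    have h3 := ((h1.sub h2).div_const 2).sub_const (1 / 3 : ℝ)
    have : Tendsto (fun n : ℕ => (∑ i ∈ Finset.range n,
        (((a i : ℝ) - if a i = 1 then 1 else 0) / 2 - 1 / 3)) / n) atTop
        (nhds ((L - L) / 2 - 1 / 3)) := by
      refine h3.congr' ?_
      filter_upwards [eventually_gt_atTop 0] with n hn
      have hn : (n : ℝ) ≠ 0 := by positivity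
      rw [Finset.sum_sub_distrib, ← Finset.sum_div, Finset.sum_sub_distrib, Finset.sum_boole]
      simp
      field_simp
    have := tendsto_nhds_unique h this
    norm_num at this
  · intro d; fin_cases d <;> norm_num [abs_le]
  · norm_num [Fin.sum_univ_three]

lemma Mset_dense : Set.Icc (0 : ℝ) 1 ⊆ closure (Mset 1) := by
  intro x hx
  obtain ⟨a, -, rfl⟩ := Real.ofDigits_SurjOn (b := 3) (by norm_num) hx
  rw [Metric.mem_closure_iff]
  intro e he
  obtain ⟨m, hm⟩ := exists_pow_lt_of_lt_one he (show (3⁻¹ : ℝ) < 1 by norm_num)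
  let c : ℕ → Fin 3 := fun i => if i < m then a i else 0
  refine ⟨Real.ofDigits c, ⟨fun n => c n, fun n => (c n).2, (val3_fin c).symm, 0, ?_, ?_⟩, ?_⟩
  · refine squeeze_zero' (g := fun n : ℕ => ((2 * m : ℝ)) / n) (Eventually.of_forall fun n => by positivity) ?_
      (tendsto_const_div_atTop_nhds_zero_nat _)
    refine Eventually.of_forall fun n => ?_
    gcongr
    calc ∑ k ∈ Finset.range n, ((c k : ℕ) : ℝ) ≤ ∑ k ∈ Finset.range n, if k < m then (2 : ℝ) else 0 := by
          refine Finset.sum_le_sum fun k _ => ?_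
          by_cases hk : k < m
          · have : (c k : ℕ) ≤ 2 := by have := (c k).2; omega
            simp only [hk, if_true]; exact_mod_cast this
          · simp [c, hk]
      _ = 2 * ((Finset.range n).filter (· < m)).card := by
          rw [← Finset.sum_filter]; simp [mul_comm]
      _ ≤ 2 * m := by
          gcongr
          calc _ ≤ (Finset.range m).card := Finset.card_le_card fun k hk => by
                simp at hk ⊢; omega
            _ = m := by simp
  · refine squeeze_zero' (g := fun n : ℕ => ((m : ℝ)) / n) (Eventually.of_forall fun n => by positivity) ?_
      (tendsto_const_div_atTop_nhds_zero_nat _)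
    refine Eventually.of_forall fun n => ?_
    gcongr
    calc _ ≤ (Finset.range m).card := Finset.card_le_card fun k hk => by
          simp only [Finset.mem_filter, Finset.mem_range] at hk ⊢
          by_contra hkm
          simp [c, hkm] at hk
      _ = m := by simp
  · rw [Real.dist_eq]
    refine (Real.abs_ofDigits_sub_ofDigits_le (n := m) fun i hi => ?_).trans_lt ?_
    · simp [c, hi]
    · simpa using hm

lemma lower3 (a c : ℕ → Fin 3) (ha : ∀ n, (a n : ℕ) < 2) (hc : ∀ n, (c n : ℕ) < 2) (k : ℕ)
    (hk : ∀ i < k, a i = c i) (hlt : (c k : ℕ) < (a k : ℕ)) :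
    (3 ^ k : ℝ)⁻¹ / 6 ≤ Real.ofDigits a - Real.ofDigits c := by
  have hhalf : ∀ c : ℕ → Fin 3, (∀ n, (c n : ℕ) < 2) → Real.ofDigits c ≤ 1 / 2 := by
    intro c hc
    -- digits of c at most 1
    have h2 : Real.ofDigits (fun n => (⟨2 * (c n : ℕ), by have := hc n; omega⟩ : Fin 3)) =
        2 * Real.ofDigits c := by
      rw [Real.ofDigits, Real.ofDigits, ← tsum_mul_left]
      refine tsum_congr fun n => ?_
      simp [Real.ofDigitsTerm]; ring
    have := Real.ofDigits_le_one (fun n => (⟨2 * (c n : ℕ), by have := hc n; omega⟩ : Fin 3))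
    linarith
  rw [Real.ofDigits_eq_sum_add_ofDigits a (k + 1), Real.ofDigits_eq_sum_add_ofDigits c (k + 1),
    Finset.sum_range_succ, Finset.sum_range_succ]
  have : ∑ i ∈ Finset.range k, Real.ofDigitsTerm a i = ∑ i ∈ Finset.range k, Real.ofDigitsTerm c i :=
    Finset.sum_congr rfl fun i hi ↦ by simp [Real.ofDigitsTerm, hk i (Finset.mem_range.mp hi)]
  have hA := Real.ofDigits_nonneg (fun i => a (i + (k + 1)))
  have hC := hhalf (fun i => c (i + (k + 1))) (fun n => hc _)
  have hak : (a k : ℕ) = 1 := by have := ha k; omega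
  have hck : (c k : ℕ) = 0 := by have := ha k; omega
  rw [this]
  simp only [Real.ofDigitsTerm, hak, hck]
  have hp : (0 : ℝ) < (3 ^ k : ℝ)⁻¹ := by positivity
  push_cast
  rw [pow_succ, mul_inv]
  nlinarith

/-- the embedding of binary into ternary digits -/
def emb (a : ℕ → Fin 2) : ℕ → Fin 3 := fun n => (a n).castSucc

noncomputable def rr : NNReal := ⟨Real.log 2 / Real.log 3, by positivity⟩

lemma rr_pow (k : ℕ) : ((3 ^ k : ℝ)⁻¹) ^ (rr : ℝ) = (2 ^ k : ℝ)⁻¹ := by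
  have h3 : (3 : ℝ) ^ (rr : ℝ) = 2 := by
    change (3 : ℝ) ^ (Real.log 2 / Real.log 3) = 2
    rw [Real.rpow_def_of_pos (by norm_num), mul_div_cancel₀, Real.exp_log (by norm_num)]
    exact (Real.log_pos (by norm_num)).ne'
  rw [Real.inv_rpow (by positivity), ← Real.rpow_natCast, ← Real.rpow_mul (by norm_num), mul_comm,
    Real.rpow_mul (by norm_num), h3, Real.rpow_natCast]

lemma holder_ineq (a c : ℕ → Fin 2) :
    |Real.ofDigits a - Real.ofDigits c| ≤
      (6 : ℝ) ^ (rr : ℝ) * |Real.ofDigits (emb a) - Real.ofDigits (emb c)| ^ (rr : ℝ) := by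
  classical
  by_cases h : a = c
  · subst h; simp; positivity
  have hex : ∃ n, a n ≠ c n := by
    by_contra hh; push Not at hh; exact h (funext hh)
  set k := Nat.find hex
  have hk : a k ≠ c k := Nat.find_spec hex
  have hlt : ∀ i < k, a i = c i := fun i hi => not_not.1 (Nat.find_min hex hi)
  have h1 := Real.abs_ofDigits_sub_ofDigits_le hlt
  have h2 : (3 ^ k : ℝ)⁻¹ / 6 ≤ |Real.ofDigits (emb a) - Real.ofDigits (emb c)| := by
    rcases lt_or_gt_of_ne hk with h | h
    · rw [abs_sub_comm]
      refine (lower3 (emb c) (emb a) (fun n => (c n).2) (fun n => (a n).2) k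
        (fun i hi => by simp [emb, hlt i hi]) h).trans (le_abs_self _)
    · refine (lower3 (emb a) (emb c) (fun n => (a n).2) (fun n => (c n).2) k
        (fun i hi => by simp [emb, hlt i hi]) h).trans (le_abs_self _)
  rw [← Real.mul_rpow (by norm_num) (abs_nonneg _)]
  calc _ ≤ _ := h1
    _ = ((3 ^ k : ℝ)⁻¹) ^ (rr : ℝ) := by rw [rr_pow]; norm_num
    _ ≤ _ := by
      apply Real.rpow_le_rpow (by positivity) _ rr.2
      linarith

def GG : Set (ℕ → Fin 2) := {a | Tendsto
  (fun n : ℕ => (∑ i ∈ Finset.range n, (((a i : ℕ) : ℝ) - 1 / 2)) / n) atTop (nhds 0)}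

lemma emb_mem {a : ℕ → Fin 2} (ha : a ∈ GG) : Real.ofDigits (emb a) ∈ Mset 1 := by
  have key : Tendsto (fun n : ℕ => (∑ i ∈ Finset.range n, ((a i : ℕ) : ℝ)) / n) atTop
      (nhds (0 + 1 / 2)) := by
    refine (Tendsto.add_const (1 / 2 : ℝ) ha).congr' ?_
    filter_upwards [eventually_gt_atTop 0] with n hn
    have hn : (n : ℝ) ≠ 0 := by positivity
    rw [Finset.sum_sub_distrib]
    simp
    field_simp
    ring
  refine ⟨fun n => emb a n, fun n => (emb a n).2, (val3_fin _).symm, 0 + 1 / 2, key, ?_⟩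
  refine key.congr fun n => ?_
  congr 1
  rw [← Finset.sum_boole]
  refine Finset.sum_congr rfl fun i _ => ?_
  have := (a i).2
  have key2 : ∀ d : Fin 2, ((d : ℕ) : ℝ) = if (d : ℕ) = 1 then 1 else 0 := by
    intro d; fin_cases d <;> simp
  exact key2 (a i)

lemma GG_vol : volume (Real.ofDigits '' GG) ≠ 0 := by
  intro h0
  have h1 := bad_null (b := 2) (by norm_num) (fun d => ((d : ℕ) : ℝ) - 1 / 2)
    (by intro d; fin_cases d <;> norm_num [abs_le])
    (by norm_num [Fin.sum_univ_two])
  have h2 := measure_mono_null (s := Set.Icc (0 : ℝ) 1) ?_ (measure_union_null h0 h1)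
  · simp at h2
  · intro x hx
    obtain ⟨a, -, rfl⟩ := Real.ofDigits_SurjOn (b := 2) (by norm_num) hx
    by_cases ha : a ∈ GG
    · exact Or.inl ⟨a, ha, rfl⟩
    · exact Or.inr ⟨a, rfl, ha⟩

lemma Mset_dim : ENNReal.ofReal (Real.log 2 / Real.log 3) ≤ dimH (Mset 1) := by
  classical
  let X : Set ℝ := (fun a => Real.ofDigits (emb a)) '' GG
  let f : ℝ → ℝ := fun x => if h : ∃ a : ℕ → Fin 2, Real.ofDigits (emb a) = x then
    Real.ofDigits h.choose else 0
  have hf : ∀ a, f (Real.ofDigits (emb a)) = Real.ofDigits a := by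
    intro a
    have h : ∃ c : ℕ → Fin 2, Real.ofDigits (emb c) = Real.ofDigits (emb a) := ⟨a, rfl⟩
    have hr : (rr : ℝ) ≠ 0 := by
      change Real.log 2 / Real.log 3 ≠ 0
      positivity
    have h2 := holder_ineq h.choose a
    rw [h.choose_spec, sub_self, abs_zero, Real.zero_rpow hr, mul_zero] at h2
    simp only [f, dif_pos h]
    exact sub_eq_zero.1 (abs_nonpos_iff.1 h2)
  have hr0 : 0 < rr := by
    change (0 : ℝ) < Real.log 2 / Real.log 3
    positivity
  have hH : HolderOnWith ((6 : NNReal) ^ (rr : ℝ)) rr f X := by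
    rintro _ ⟨a, -, rfl⟩ _ ⟨c, -, rfl⟩
    simp only [hf]
    rw [edist_dist, edist_dist, Real.dist_eq, Real.dist_eq,
      ENNReal.ofReal_rpow_of_nonneg (abs_nonneg _) rr.coe_nonneg, ← ENNReal.ofReal_coe_nnreal,
      ← ENNReal.ofReal_mul (by positivity)]
    apply ENNReal.ofReal_le_ofReal
    simpa using holder_ineq a c
  have himg : f '' X = Real.ofDigits '' GG := by
    simp only [X, Set.image_image, hf]
  have h1 : ((1 : NNReal) : ENNReal) ≤ dimH (f '' X) := by
    apply le_dimH_of_hausdorffMeasure_ne_zero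
    rw [himg, NNReal.coe_one, hausdorffMeasure_real]
    exact GG_vol
  have h2 := h1.trans (hH.dimH_image_le hr0)
  rw [ENNReal.le_div_iff_mul_le (by left; simpa using hr0.ne') (by left; simp)] at h2
  have h3 : ENNReal.ofReal (Real.log 2 / Real.log 3) = (rr : ENNReal) := by
    rw [← ENNReal.ofReal_coe_nnreal]; rfl
  rw [h3]
  refine le_trans (by simpa using h2) (dimH_mono (t := Mset 1) ?_)
  rintro _ ⟨a, ha, rfl⟩
  exact emb_mem ha

/-- The set `M₁` is dense in `[0,1]`, has Lebesgue measure zero, and its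
Hausdorff–Besicovitch dimension is at least `log 2 / log 3`. -/
theorem Mset_one_dense_measureZero_dimH :
    Set.Icc (0 : ℝ) 1 ⊆ closure (Mset 1) ∧
    MeasureTheory.volume (Mset 1) = 0 ∧
    ENNReal.ofReal (Real.log 2 / Real.log 3) ≤ dimH (Mset 1) :=
  ⟨Mset_dense, Mset_null, Mset_dim⟩
end

section
/- The set M_2 is dense in the interval [0,1] and is anomalously fractal: its Hausdorff–Besicovitch dimension equals 0, i.e. dimH(M_2) = 0. -/
open Filter

open MeasureTheory Topology in
theorem val3_eq (b : ℕ → Fin 3) : val3 (fun k => (b k : ℕ)) = Real.ofDigits b := by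
  simp only [val3, Real.ofDigits, Real.ofDigitsTerm, div_eq_mul_inv, Nat.cast_ofNat]

theorem tend_aux {u v : ℕ → ℝ} (h : Tendsto (fun n : ℕ => (v n) / n) atTop (nhds 0))
    (h0 : ∀ n, 0 ≤ u n) (h1 : ∀ n, u n ≤ v n) :
    Tendsto (fun n : ℕ => (u n) / n) atTop (nhds 0) := by
  refine squeeze_zero (fun n => div_nonneg (h0 n) (Nat.cast_nonneg n)) (fun n => ?_) h
  exact div_le_div_of_nonneg_right (h1 n) (Nat.cast_nonneg n)

theorem card_eq_sum (a : ℕ → ℕ) (n : ℕ) :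
    (((Finset.range n).filter (fun j => a j = 2)).card : ℝ)
      = ∑ k ∈ Finset.range n, (if a k = 2 then (1 : ℝ) else 0) := by
  rw [Finset.card_filter]; push_cast; rfl

theorem dense_part : Set.Icc (0 : ℝ) 1 ⊆ closure (Mset 2) := by
  suffices h : Set.Ico (0 : ℝ) 1 ⊆ closure (Mset 2) by
    have := closure_minimal h isClosed_closure
    rwa [closure_Ico (by norm_num)] at this
  intro x hx
  have hs := (Real.hasSum_ofDigitsTerm_digits x (b := 3) (by norm_num) hx).tendsto_sum_nat
  refine mem_closure_of_tendsto hs (Eventually.of_forall fun n => ?_)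
  set d := Real.digits x 3
  refine ⟨fun k => if k < n then (d k : ℕ) else 0, ?_, ?_, 0, ?_, ?_⟩
  · intro k; dsimp only; split_ifs
    · exact (d k).2
    · norm_num
  · rw [val3, tsum_eq_sum (s := Finset.range n)]
    · refine Finset.sum_congr rfl fun k hk => ?_
      rw [if_pos (Finset.mem_range.1 hk)]
      simp [Real.ofDigitsTerm, div_eq_mul_inv]
    · intro k hk
      rw [if_neg (by simpa using hk)]; simp
  · refine tend_aux (v := fun _ => ∑ k ∈ Finset.range n, (d k : ℝ))
      (tendsto_const_div_atTop_nhds_zero_nat _)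
      (fun m => Finset.sum_nonneg fun _ _ => Nat.cast_nonneg _) fun m => ?_
    simp only [Nat.cast_ite, Nat.cast_zero]
    rw [← Finset.sum_filter]
    refine Finset.sum_le_sum_of_subset_of_nonneg ?_ fun _ _ _ => Nat.cast_nonneg _
    intro k hk; simp at hk ⊢; exact hk.2
  · refine tend_aux (v := fun _ => (n : ℝ))
      (tendsto_const_div_atTop_nhds_zero_nat _)
      (fun m => Nat.cast_nonneg _) fun m => ?_
    norm_cast
    refine (Finset.card_le_card (t := Finset.range n) ?_).trans (by simp)
    intro k hk
    simp only [Finset.mem_filter, Finset.mem_range] at hk ⊢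
    by_contra hc
    rw [if_neg hc] at hk; omega

theorem mean_zero {a : ℕ → ℕ} (ha : ∀ n, a n < 3) {L : ℝ}
    (h1 : Tendsto (fun n : ℕ => (∑ k ∈ Finset.range n, (a k : ℝ)) / n) atTop (nhds L))
    (h2 : Tendsto (fun n : ℕ => (((Finset.range n).filter (fun j => a j = 2)).card : ℝ) / n)
      atTop (nhds L)) :
    Tendsto (fun n : ℕ => (∑ k ∈ Finset.range n, (a k : ℝ)) / n) atTop (nhds 0) := by
  have h := (h1.sub h2).const_mul 2
  rw [sub_self, mul_zero] at h
  refine tend_aux (v := fun n => 2 * ((∑ k ∈ Finset.range n, (a k : ℝ)) -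
    (((Finset.range n).filter (fun j => a j = 2)).card : ℝ))) ?_
    (fun m => Finset.sum_nonneg fun _ _ => Nat.cast_nonneg _) fun m => ?_
  · refine h.congr fun n => ?_
    ring
  · rw [card_eq_sum, ← Finset.sum_sub_distrib, Finset.mul_sum]
    refine Finset.sum_le_sum fun k _ => ?_
    have := ha k
    interval_cases a k <;> norm_num

/-- sequences with digit sums at most `ε n` for `n ≥ N` -/
def Aset (ε : ℝ) (N : ℕ) : Set ℝ :=
  {x | ∃ b : ℕ → Fin 3, x = Real.ofDigits b ∧
    ∀ n, N ≤ n → ∑ k ∈ Finset.range n, ((b k : ℕ) : ℝ) ≤ ε * n}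

theorem Mset_sub {ε : ℝ} (hε : 0 < ε) : Mset 2 ⊆ ⋃ N, Aset ε N := by
  rintro x ⟨a, ha, rfl, L, h1, h2⟩
  have h := mean_zero ha h1 h2
  obtain ⟨N, hN⟩ := eventually_atTop.1 (h.eventually_lt_const hε)
  refine Set.mem_iUnion.2 ⟨N + 1, fun k => ⟨a k, ha k⟩, ?_, fun n hn => ?_⟩
  · rw [← val3_eq]
  · have := hN n (by omega)
    rw [div_lt_iff₀ (by exact_mod_cast (by omega : 0 < n))] at this
    exact this.le

theorem card_bound {z ε c : ℝ} (hz : 0 < z) (hz1 : z < 1) (hc : 1 + z + z ^ 2 ≤ z ^ ε * c) (n : ℕ) :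
    (Nat.card {w : Fin n → Fin 3 // ∑ i, ((w i : ℕ) : ℝ) ≤ ε * n} : ℝ) ≤ c ^ n := by
  classical
  have hze : 0 < z ^ ε := Real.rpow_pos_of_pos hz _
  rw [Nat.card_eq_fintype_card, Fintype.card_subtype]
  have h1 : (1 + z + z ^ 2) ^ n = ∑ w : Fin n → Fin 3, ∏ i, z ^ (w i : ℕ) := by
    rw [← Fintype.sum_pow (fun j : Fin 3 => z ^ (j : ℕ)), Fin.sum_univ_three]; simp
  have h2 : ((Finset.univ.filter
      (fun w : Fin n → Fin 3 => ∑ i, ((w i : ℕ) : ℝ) ≤ ε * n)).card : ℝ) * (z ^ ε) ^ n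
      ≤ (1 + z + z ^ 2) ^ n := by
    rw [h1, ← nsmul_eq_mul]
    refine (Finset.card_nsmul_le_sum _ (fun w : Fin n → Fin 3 => ∏ i, z ^ (w i : ℕ)) _ ?_).trans
      (Finset.sum_le_sum_of_subset_of_nonneg (Finset.filter_subset _ _)
        fun w _ _ => by positivity)
    intro w hw
    rw [Finset.prod_pow_eq_pow_sum, ← Real.rpow_natCast, ← Real.rpow_natCast, ← Real.rpow_mul hz.le]
    refine Real.rpow_le_rpow_of_exponent_ge hz hz1.le ?_
    push_cast
    exact (Finset.mem_filter.1 hw).2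
  have h3 : (1 + z + z ^ 2) ^ n ≤ (z ^ ε * c) ^ n := pow_le_pow_left₀ (by positivity) hc n
  rw [mul_pow, mul_comm] at h3
  exact le_of_mul_le_mul_right (h2.trans h3) (by positivity)

open MeasureTheory in
theorem dim_Aset {d : NNReal} {z ε : ℝ} (hz : 0 < z) (hz1 : z < 1)
    (hc : 1 + z + z ^ 2 ≤ z ^ ε * (3 : ℝ) ^ (d : ℝ)) (N : ℕ) : dimH (Aset ε N) ≤ d := by
  classical
  refine dimH_le_of_hausdorffMeasure_ne_top (ne_top_of_le_ne_top ENNReal.one_ne_top ?_)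
  let v : ∀ n, (Fin n → Fin 3) → ℝ := fun n w => ∑ i, ((w i : ℕ) : ℝ) * ((3 : ℝ) ^ ((i : ℕ) + 1))⁻¹
  have hdiam : ∀ n (w : Fin n → Fin 3),
      Metric.ediam (Set.Icc (v n w) (v n w + ((3 : ℝ) ^ n)⁻¹)) = ENNReal.ofReal (((3 : ℝ) ^ n)⁻¹) := by
    intro n w
    rw [Real.ediam_Icc]; congr 1; ring
  refine (Measure.hausdorffMeasure_le_liminf_sum (β := ℕ) (l := atTop)
    (ι := fun n => {w : Fin n → Fin 3 // ∑ i, ((w i : ℕ) : ℝ) ≤ ε * n}) d (Aset ε N)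
    (fun n => ENNReal.ofReal (((3 : ℝ) ^ n)⁻¹)) ?_
    (fun n w => Set.Icc (v n w.1) (v n w.1 + ((3 : ℝ) ^ n)⁻¹)) ?_ ?_).trans ?_
  · rw [← ENNReal.ofReal_zero]
    refine ENNReal.tendsto_ofReal ?_
    simp_rw [← inv_pow]
    exact tendsto_pow_atTop_nhds_zero_of_lt_one (by norm_num) (by norm_num)
  · exact Eventually.of_forall fun n w => (hdiam n w.1).le
  · filter_upwards [eventually_ge_atTop N] with n hn
    rintro x ⟨b, rfl, hb⟩
    refine Set.mem_iUnion.2 ⟨⟨fun i => b i, ?_⟩, ?_⟩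
    · have := hb n hn
      rwa [Finset.sum_range] at this
    · have h := Real.ofDigits_eq_sum_add_ofDigits b n
      have h0 := Real.ofDigits_nonneg (fun i => b (i + n))
      have h1 := Real.ofDigits_le_one (fun i => b (i + n))
      have hp : (0 : ℝ) < ((3 : ℝ) ^ n)⁻¹ := by positivity
      rw [Finset.sum_range] at h
      simp only [Real.ofDigitsTerm, Nat.cast_ofNat] at h
      rw [h]
      refine ⟨le_add_of_nonneg_right (by positivity), ?_⟩
      refine add_le_add le_rfl ?_
      nlinarith
  · refine liminf_le_of_le (by isBoundedDefault) fun B hB => ?_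
    obtain ⟨n, hn⟩ := hB.exists
    refine hn.trans ?_
    simp_rw [hdiam]
    rw [Finset.sum_const, Finset.card_univ, nsmul_eq_mul, ← Nat.card_eq_fintype_card,
      ENNReal.ofReal_rpow_of_pos (by positivity), ← ENNReal.ofReal_natCast,
      ← ENNReal.ofReal_mul (Nat.cast_nonneg _), ENNReal.ofReal_le_one]
    have := card_bound hz hz1 hc n
    have h3 : ((((3 : ℝ) ^ n)⁻¹) ^ (d : ℝ)) = (((3 : ℝ) ^ (d : ℝ)) ^ n)⁻¹ := by
      rw [Real.inv_rpow (by positivity), ← Real.rpow_natCast, ← Real.rpow_natCast,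
        ← Real.rpow_mul (by norm_num), ← Real.rpow_mul (by norm_num), mul_comm]
    rw [h3, ← div_eq_mul_inv, div_le_one (by positivity)]
    exact this

theorem exists_params {c : ℝ} (hc : 1 < c) :
    ∃ z ε : ℝ, 0 < z ∧ z < 1 ∧ 0 < ε ∧ 1 + z + z ^ 2 ≤ z ^ ε * c := by
  have h1 : ∀ᶠ z : ℝ in nhdsWithin 0 (Set.Ioi 0), 1 + z + z ^ 2 < c := by
    have : Tendsto (fun z : ℝ => 1 + z + z ^ 2) (nhds 0) (nhds (1 + 0 + 0 ^ 2)) :=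
      Continuous.tendsto (by fun_prop) 0
    exact (this.mono_left nhdsWithin_le_nhds).eventually_lt_const (by simpa using hc)
  obtain ⟨z, hz, hz0, hz1⟩ :=
    (h1.and (Ioo_mem_nhdsGT (show (0 : ℝ) < 1 by norm_num))).exists
  have h2 : ∀ᶠ e : ℝ in nhdsWithin 0 (Set.Ioi 0), 1 + z + z ^ 2 < z ^ e * c := by
    have : Tendsto (fun e : ℝ => z ^ e * c) (nhds 0) (nhds (z ^ (0 : ℝ) * c)) :=
      ((Real.continuous_const_rpow hz0.ne').mul continuous_const).tendsto 0
    exact (this.mono_left nhdsWithin_le_nhds).eventually_const_lt (by simpa using hz)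
  obtain ⟨e, he, he0⟩ := (h2.and self_mem_nhdsWithin).exists
  exact ⟨z, e, hz0, hz1, he0, he.le⟩

/-- The set `M₂` is dense in the interval `[0,1]` and is anomalously fractal: its
Hausdorff–Besicovitch dimension equals `0`. -/
theorem Mset_two_dense_and_dimH_eq_zero :
    Set.Icc (0 : ℝ) 1 ⊆ closure (Mset 2) ∧ dimH (Mset 2) = 0 := by
  refine ⟨dense_part, le_antisymm (ENNReal.le_of_forall_pos_le_add ?_) bot_le⟩
  intro d hd _
  rw [zero_add]
  obtain ⟨z, ε, hz, hz1, hε, h⟩ := exists_params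
    (Real.one_lt_rpow (show (1 : ℝ) < 3 by norm_num) (show (0 : ℝ) < d from hd))
  refine (dimH_mono (Mset_sub hε)).trans ?_
  rw [dimH_iUnion]
  exact iSup_le fun N => dim_Aset hz hz1 h N
end
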